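/- Let Ω ⊂ R^n be open, f ∈ W^{2,1}_loc(Ω), and let B ⊂ Ω be a Borel set with H^{n-1}(B) < ∞. Then for every ε > 0 there exists a Borel set B_ε ⊂ B such that f* restricted to B_ε is Lipschitz continuous outside a set of 1-capacity zero, and H^{n-1}(B \ B_ε) < ε. -/

import Mathlib

open MeasureTheory Metric Filter Set
open scoped ENNReal Topology NNReal

noncomputable section

/-- Euclidean space ℝⁿ. -/
abbrev En (n : ℕ) := EuclideanSpace ℝ (Fin n)

variable {n : ℕ}

/-- The average of `f` over the ball `B(x,r)`. -/
def ballAvg (f : En n → ℝ) (x : En n) (r : ℝ) : ℝ :=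
  ⨍ y in Metric.ball x r, f y

open scoped Classical in
/-- The precise representative of `f`: the limit of ball averages where it exists, `0` otherwise. -/
def preciseRep (f : En n → ℝ) (x : En n) : ℝ :=
  if h : ∃ L : ℝ, Tendsto (fun r => ballAvg f x r) (nhdsWithin 0 (Set.Ioi 0)) (nhds L)
  then h.choose else 0

/-- A test function: smooth, compactly supported, with support inside `Ω`. -/
def IsTest (Ω : Set (En n)) (η : En n → ℝ) : Prop :=
  ContDiff ℝ (⊤ : ℕ∞) η ∧ HasCompactSupport η ∧ tsupport η ⊆ Ω

/-- `g` is the weak partial derivative of `f` in direction `v`, on `Ω`. -/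
def HasWeakPartialOn (Ω : Set (En n)) (f g : En n → ℝ) (v : En n) : Prop :=
  ∀ η : En n → ℝ, IsTest Ω η →
    ∫ x, f x * fderiv ℝ η x v = - ∫ x, g x * η x

/-- `g` is the weak gradient of `f` on `Ω`. -/
def HasWeakGradientOn (Ω : Set (En n)) (f : En n → ℝ) (g : En n → En n) : Prop :=
  ∀ i : Fin n, HasWeakPartialOn Ω f (fun x => g x i) (EuclideanSpace.single i 1)

/-- `f ∈ W^{1,p}(ℝⁿ)` with weak gradient `g`. -/
def MemW1p (p : ℝ) (f : En n → ℝ) (g : En n → En n) : Prop :=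
  AEStronglyMeasurable f volume ∧ AEStronglyMeasurable g volume ∧
  HasWeakGradientOn Set.univ f g ∧
  Integrable (fun x => |f x| ^ p) ∧ Integrable (fun x => ‖g x‖ ^ p)

/-- `f ∈ W^{1,p}_loc(Ω)` with weak gradient `g`. -/
def MemW1pLoc (p : ℝ) (Ω : Set (En n)) (f : En n → ℝ) (g : En n → En n) : Prop :=
  AEStronglyMeasurable f volume ∧ AEStronglyMeasurable g volume ∧
  HasWeakGradientOn Ω f g ∧
  ∀ K : Set (En n), K ⊆ Ω → IsCompact K →
    IntegrableOn (fun x => |f x| ^ p) K ∧ IntegrableOn (fun x => ‖g x‖ ^ p) K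

/-- `f ∈ W^{2,p}_loc(Ω)` with weak gradient `g` and weak second derivatives `h`. -/
def MemW2pLoc (p : ℝ) (Ω : Set (En n)) (f : En n → ℝ)
    (g : En n → En n) (h : En n → Fin n → En n) : Prop :=
  AEStronglyMeasurable f volume ∧ AEStronglyMeasurable g volume ∧
  HasWeakGradientOn Ω f g ∧
  (∀ i : Fin n, HasWeakGradientOn Ω (fun x => g x i) (fun x => h x i)) ∧
  ∀ K : Set (En n), K ⊆ Ω → IsCompact K →
    IntegrableOn (fun x => |f x| ^ p) K ∧ IntegrableOn (fun x => ‖g x‖ ^ p) K ∧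
    ∀ i : Fin n, IntegrableOn (fun x => ‖h x i‖ ^ p) K

/-- `f ∈ W^{2,p}(ℝⁿ)` with weak gradient `g` and weak second derivatives `h`. -/
def MemW2p (p : ℝ) (f : En n → ℝ) (g : En n → En n) (h : En n → Fin n → En n) : Prop :=
  AEStronglyMeasurable f volume ∧ AEStronglyMeasurable g volume ∧
  HasWeakGradientOn Set.univ f g ∧
  (∀ i : Fin n, HasWeakGradientOn Set.univ (fun x => g x i) (fun x => h x i)) ∧
  Integrable (fun x => |f x| ^ p) ∧ Integrable (fun x => ‖g x‖ ^ p) ∧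
  ∀ i : Fin n, Integrable (fun x => ‖h x i‖ ^ p)

/-- The `p`-capacity of a compact set. -/
def capK (p : ℝ) (F : Set (En n)) : ℝ≥0∞ :=
  ⨅ (g : En n → ℝ) (_ : ContDiff ℝ (⊤ : ℕ∞) g ∧ HasCompactSupport g ∧ ∀ x ∈ F, 1 ≤ g x),
    ∫⁻ x, (‖fderiv ℝ g x‖₊ : ℝ≥0∞) ^ p

/-- The `p`-capacity of an open set, by inner regularity over compact subsets. -/
def capOpen (p : ℝ) (U : Set (En n)) : ℝ≥0∞ :=
  ⨆ (F : Set (En n)) (_ : F ⊆ U ∧ IsCompact F), capK p F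

/-- The `p`-capacity of an arbitrary set, by outer regularity over open supersets. -/
def cap (p : ℝ) (E : Set (En n)) : ℝ≥0∞ :=
  ⨅ (U : Set (En n)) (_ : E ⊆ U ∧ IsOpen U), capOpen p U

/-- `f` restricted to `s` is Lipschitz outside a subset of `s` of `p`-capacity zero. -/
def LipschitzOnQE (p : ℝ) (f : En n → ℝ) (s : Set (En n)) : Prop :=
  ∃ N : Set (En n), N ⊆ s ∧ cap p N = 0 ∧ ∃ K : ℝ≥0, LipschitzOnWith K f (s \ N)

/-- The multiplicity function: the number of preimages of `y` in `A` under `φ`. -/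
def Nphi (φ : En n → En n) (A : Set (En n)) (y : En n) : ℝ≥0∞ :=
  Measure.count {x ∈ A | φ x = y}

end

/-!
Apply the boxing inequality to the components of `∇f`, which lie in `W^{1,1}_loc`: at a point where
the local maximal function of a `W^{1,1}` function `u` exceeds `2 * l`, the Poincaré and relative
isoperimetric inequalities produce a ball of some radius `ρ` on which the mass of `|∇u| / l`, plus
the perimeter of a level set `{t < |u|}` with `t ≤ l`, is at least `c * ρ ^ (n - 1)`. By the coarea
formula `t` can be chosen so that the perimeter is `O(‖∇u‖₁ / l)`, and a Vitali covering then bounds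
the `(n - 1)`-dimensional content of these points by the same quantity. Letting `l → ∞`, the local
maximal function of `∇f` is finite outside an `H^{n-1}`-null set.

Where that maximal function is at most `k`, telescoping the averages of `f` over concentric balls
shows that they converge at a rate `O(k * r)`, so the precise representative is Lipschitz there. The
exceptional set of zero capacity can therefore be taken empty. In dimension at most one, a set of
finite `H^{n-1}` measure is finite, and nothing is left to prove.
-/

section PoincareContDiff

variable {E : Type*} [NormedAddCommGroup E] [NormedSpace ℝ E]

theorem enorm_sub_le_mul_lintegral_fderiv {F : Type*} [NormedAddCommGroup F] [NormedSpace ℝ F]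
    [CompleteSpace F] {v : E → F} (hv : ContDiff ℝ 1 v) (x y : E) :
    ‖v x - v y‖ₑ ≤
      edist x y * ∫⁻ t in Icc (0 : ℝ) 1, ‖fderiv ℝ v ((1 - t) • x + t • y)‖ₑ := by
  have hcont : Continuous fun t : ℝ => fderiv ℝ v ((1 - t) • x + t • y) (y - x) := by
    have := hv.continuous_fderiv one_ne_zero
    fun_prop
  have hderiv (t : ℝ) : HasDerivAt (fun t : ℝ => v ((1 - t) • x + t • y))
      (fderiv ℝ v ((1 - t) • x + t • y) (y - x)) t := by
    refine ((hv.differentiable one_ne_zero) _).hasFDerivAt.comp_hasDerivAt t ?_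
    rw [show y - x = (-1 : ℝ) • x + (1 : ℝ) • y by module]
    exact (((hasDerivAt_id t).const_sub 1).smul_const x).add ((hasDerivAt_id t).smul_const y)
  have hftc : v y - v x = ∫ t in Icc (0 : ℝ) 1, fderiv ℝ v ((1 - t) • x + t • y) (y - x) := by
    rw [integral_Icc_eq_integral_Ioc, ← intervalIntegral.integral_of_le zero_le_one,
      intervalIntegral.integral_eq_sub_of_hasDerivAt (fun t _ => hderiv t)
        (hcont.intervalIntegrable _ _)]
    simp
  calc ‖v x - v y‖ₑ = ‖v y - v x‖ₑ := enorm_sub_rev _ _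
    _ ≤ ∫⁻ t in Icc (0 : ℝ) 1, ‖fderiv ℝ v ((1 - t) • x + t • y) (y - x)‖ₑ :=
      hftc ▸ enorm_integral_le_lintegral_enorm _
    _ ≤ ∫⁻ t in Icc (0 : ℝ) 1, edist x y * ‖fderiv ℝ v ((1 - t) • x + t • y)‖ₑ := by
      refine lintegral_mono fun t => ?_
      rw [mul_comm, edist_comm, edist_eq_enorm_sub]
      exact ContinuousLinearMap.le_opENorm _ _
    _ = _ := lintegral_const_mul' _ _ (edist_ne_top _ _)

variable [FiniteDimensional ℝ E] [MeasurableSpace E] [BorelSpace E] (μ : Measure E)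
  [μ.IsAddHaarMeasure] {s : Set E} {F : E → ℝ≥0∞}

theorem setLIntegral_comp_segment_le (hs : Convex ℝ s) (hsm : MeasurableSet s)
    (hF : Measurable F) {x : E} (hx : x ∈ s) {t : ℝ} (ht : 1 / 2 ≤ t) (ht' : t ≤ 1) :
    ∫⁻ y in s, F ((1 - t) • x + t • y) ∂μ ≤ 2 ^ Module.finrank ℝ E * ∫⁻ z in s, F z ∂μ := by
  have htpos : 0 < t := by linarith
  have hjacobian : ENNReal.ofReal |(t ^ Module.finrank ℝ E)⁻¹| ≤ 2 ^ Module.finrank ℝ E := by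
    rw [abs_of_pos (by positivity), ← inv_pow, ENNReal.ofReal_pow (by positivity)]
    gcongr
    rw [← ENNReal.ofReal_ofNat]
    exact ENNReal.ofReal_le_ofReal (inv_le_of_inv_le₀ two_pos (by linarith))
  have hFs : Measurable (s.indicator F) := hF.indicator hsm
  calc ∫⁻ y in s, F ((1 - t) • x + t • y) ∂μ
      ≤ ∫⁻ y, s.indicator F ((1 - t) • x + t • y) ∂μ := by
        rw [← lintegral_indicator hsm]
        refine lintegral_mono (indicator_le fun y hy => ?_)
        rw [indicator_of_mem (hs hx hy (by linarith) htpos.le (by ring))]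
    _ = ∫⁻ z, s.indicator F ((1 - t) • x + z) ∂(μ.map (t • ·)) :=
        (lintegral_map (hFs.comp (measurable_const_add _)) (measurable_const_smul t)).symm
    _ = ENNReal.ofReal |(t ^ Module.finrank ℝ E)⁻¹| * ∫⁻ z in s, F z ∂μ := by
        rw [Measure.map_addHaar_smul _ htpos.ne', lintegral_smul_measure,
          lintegral_add_left_eq_self (s.indicator F), lintegral_indicator hsm, smul_eq_mul]
    _ ≤ _ := by gcongr

theorem setLIntegral_setLIntegral_comp_segment_le (hs : Convex ℝ s) (hsm : MeasurableSet s)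
    (hF : Measurable F) {t : ℝ} (ht : t ∈ Icc (0 : ℝ) 1) :
    ∫⁻ x in s, ∫⁻ y in s, F ((1 - t) • x + t • y) ∂μ ∂μ ≤
      2 ^ Module.finrank ℝ E * μ s * ∫⁻ z in s, F z ∂μ := by
  have : ProperSpace E := FiniteDimensional.proper ℝ E
  wlog hhalf : 1 / 2 ≤ t generalizing t
  · have hmeas : Measurable fun p : E × E => F ((1 - t) • p.1 + t • p.2) :=
      hF.comp (by fun_prop)
    rw [lintegral_lintegral_swap hmeas.aemeasurable]
    have := this (t := 1 - t) ⟨by linarith [ht.2], by linarith [ht.1]⟩ (by linarith)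
    simpa only [sub_sub_cancel, add_comm] using this
  calc ∫⁻ x in s, ∫⁻ y in s, F ((1 - t) • x + t • y) ∂μ ∂μ
      ≤ ∫⁻ _ in s, 2 ^ Module.finrank ℝ E * ∫⁻ z in s, F z ∂μ ∂μ :=
        setLIntegral_mono measurable_const fun x hx =>
          setLIntegral_comp_segment_le μ hs hsm hF hx hhalf ht.2
    _ = _ := by rw [setLIntegral_const]; ring

theorem lintegral_lintegral_lintegral_segment_swap (hF : Measurable F) (ν : Measure E)
    [SFinite ν] (τ : Measure ℝ) [SFinite τ] :
    ∫⁻ x, ∫⁻ y, ∫⁻ t, F ((1 - t) • x + t • y) ∂τ ∂ν ∂ν =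
      ∫⁻ t, ∫⁻ x, ∫⁻ y, F ((1 - t) • x + t • y) ∂ν ∂ν ∂τ := by
  have : ProperSpace E := FiniteDimensional.proper ℝ E
  have hinner (x : E) : ∫⁻ y, ∫⁻ t, F ((1 - t) • x + t • y) ∂τ ∂ν =
      ∫⁻ t, ∫⁻ y, F ((1 - t) • x + t • y) ∂ν ∂τ := by
    refine lintegral_lintegral_swap (Measurable.aemeasurable ?_)
    exact hF.comp (f := fun p : E × ℝ => (1 - p.2) • x + p.2 • p.1) (by fun_prop)
  simp_rw [hinner]
  refine lintegral_lintegral_swap (Measurable.aemeasurable ?_)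
  have hjoint : Measurable fun q : (E × ℝ) × E => F ((1 - q.1.2) • q.1.1 + q.1.2 • q.2) :=
    hF.comp (by fun_prop)
  exact hjoint.lintegral_prod_right'

theorem lintegral_lintegral_enorm_sub_le_of_contDiff {F : Type*} [NormedAddCommGroup F]
    [NormedSpace ℝ F] [CompleteSpace F] {v : E → F} (hv : ContDiff ℝ 1 v) (hs : Convex ℝ s)
    (hsm : MeasurableSet s) (hbdd : Bornology.IsBounded s) :
    ∫⁻ x in s, ∫⁻ y in s, ‖v x - v y‖ₑ ∂μ ∂μ ≤
      ediam s * (2 ^ Module.finrank ℝ E * μ s * ∫⁻ z in s, ‖fderiv ℝ v z‖ₑ ∂μ) := by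
  have : ProperSpace E := FiniteDimensional.proper ℝ E
  have hDv : Measurable fun z => ‖fderiv ℝ v z‖ₑ :=
    (hv.continuous_fderiv one_ne_zero).enorm.measurable
  have hdiam : ediam s ≠ ⊤ := hbdd.ediam_ne_top
  calc ∫⁻ x in s, ∫⁻ y in s, ‖v x - v y‖ₑ ∂μ ∂μ
      ≤ ∫⁻ x in s, ∫⁻ y in s, ediam s *
          (∫⁻ t in Icc (0 : ℝ) 1, ‖fderiv ℝ v ((1 - t) • x + t • y)‖ₑ) ∂μ ∂μ := by
        refine setLIntegral_mono' hsm fun x hx => setLIntegral_mono' hsm fun y hy => ?_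
        refine (enorm_sub_le_mul_lintegral_fderiv hv x y).trans ?_
        gcongr
        exact edist_le_ediam_of_mem hx hy
    _ = ediam s * ∫⁻ t in Icc (0 : ℝ) 1, ∫⁻ x in s, ∫⁻ y in s,
          ‖fderiv ℝ v ((1 - t) • x + t • y)‖ₑ ∂μ ∂μ := by
        simp_rw [lintegral_const_mul' _ _ hdiam]
        rw [lintegral_lintegral_lintegral_segment_swap hDv]
    _ ≤ ediam s * ∫⁻ _ in Icc (0 : ℝ) 1,
          2 ^ Module.finrank ℝ E * μ s * (∫⁻ z in s, ‖fderiv ℝ v z‖ₑ ∂μ) := by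
        gcongr 1
        exact setLIntegral_mono measurable_const fun t ht =>
          setLIntegral_setLIntegral_comp_segment_le μ hs hsm hDv ht
    _ = _ := by rw [setLIntegral_const]; simp

end PoincareContDiff

section Fatou

variable {α : Type*} [MeasurableSpace α] {μ : Measure α}

theorem tsum_liminf_le {ι : Type*} [Countable ι] (f : ι → ℕ → ℝ≥0∞) :
    ∑' i, liminf (f i) atTop ≤ liminf (fun k => ∑' i, f i k) atTop := by
  let : MeasurableSpace ι := ⊤
  simpa only [lintegral_count] using
    lintegral_liminf_le (μ := Measure.count) (f := fun k i => f i k)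
      fun _ => measurable_from_top

theorem lintegral_add_lintegral_sub {a b : α → ℝ≥0∞} (ha : AEMeasurable a μ) (hab : a ≤ᵐ[μ] b) :
    ∫⁻ x, a x ∂μ + ∫⁻ x, (b x - a x) ∂μ = ∫⁻ x, b x ∂μ := by
  rw [← lintegral_add_left' ha]
  exact lintegral_congr_ae (hab.mono fun x hx => add_tsub_cancel_of_le hx)

theorem limsup_lintegral_le_of_tendsto {a b : ℕ → α → ℝ≥0∞} {A B : α → ℝ≥0∞}
    (ha : ∀ k, AEMeasurable (a k) μ) (hb : ∀ k, AEMeasurable (b k) μ)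
    (hab : ∀ k, a k ≤ᵐ[μ] b k)
    (hA : ∀ᵐ x ∂μ, Tendsto (fun k => a k x) atTop (𝓝 (A x)))
    (hB : ∀ᵐ x ∂μ, Tendsto (fun k => b k x) atTop (𝓝 (B x)))
    (hintB : Tendsto (fun k => ∫⁻ x, b k x ∂μ) atTop (𝓝 (∫⁻ x, B x ∂μ)))
    (hfin : ∫⁻ x, B x ∂μ ≠ ⊤) :
    limsup (fun k => ∫⁻ x, a k x ∂μ) atTop ≤ ∫⁻ x, A x ∂μ := by
  have hAm : AEMeasurable A μ := aemeasurable_of_tendsto_metrizable_ae' ha hA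
  have hBfin : ∀ᵐ x ∂μ, B x < ⊤ := ae_lt_top' (aemeasurable_of_tendsto_metrizable_ae' hb hB) hfin
  have hAB : A ≤ᵐ[μ] B := by
    filter_upwards [hA, hB, ae_all_iff.2 hab] with x hAx hBx habx
    exact le_of_tendsto_of_tendsto' hAx hBx habx
  have hfatou : ∫⁻ x, (B x - A x) ∂μ ≤ liminf (fun k => ∫⁻ x, (b k x - a k x) ∂μ) atTop := by
    refine le_trans (lintegral_mono_ae ?_) (lintegral_liminf_le' fun k => (hb k).sub (ha k))
    filter_upwards [hA, hB, hBfin] with x hAx hBx hfinx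
    exact (ENNReal.Tendsto.sub hBx hAx (Or.inl hfinx.ne)).liminf_eq.ge
  have hsplit := lintegral_add_lintegral_sub hAm hAB
  by_contra! hlt
  obtain ⟨c, hAc, hc⟩ := exists_between hlt
  have hgap : ∫⁻ x, B x ∂μ < liminf (fun k => c + ∫⁻ x, (b k x - a k x) ∂μ) atTop := by
    have hsub : ∫⁻ x, (B x - A x) ∂μ ≠ ⊤ := ne_top_of_le_ne_top hfin (hsplit ▸ le_add_self)
    rw [← hsplit, liminf_const_add _ _ c (by isBoundedDefault) (by isBoundedDefault)]
    exact (ENNReal.add_lt_add_right hsub hAc).trans_le (by gcongr)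
  obtain ⟨m, hBm, hm⟩ := exists_between hgap
  obtain ⟨k, hck, hbk, hmk⟩ := ((frequently_lt_of_lt_limsup (by isBoundedDefault) hc).and_eventually
    ((hintB.eventually_lt_const hBm).and (eventually_lt_of_lt_liminf hm))).exists
  refine (hbk.trans hmk).not_ge ?_
  rw [← lintegral_add_lintegral_sub (ha k) (hab k)]
  gcongr

theorem lintegral_lintegral_enorm_sub_le_liminf {F : Type*} [NormedAddCommGroup F] [SFinite μ]
    {v : ℕ → α → F} {w : α → F} (hv : ∀ k, StronglyMeasurable (v k))
    (hvw : ∀ᵐ x ∂μ, Tendsto (fun k => v k x) atTop (𝓝 (w x))) :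
    ∫⁻ x, ∫⁻ y, ‖w x - w y‖ₑ ∂μ ∂μ ≤
      liminf (fun k => ∫⁻ x, ∫⁻ y, ‖v k x - v k y‖ₑ ∂μ ∂μ) atTop := by
  have hinner (x : α) (hx : Tendsto (fun k => v k x) atTop (𝓝 (w x))) :
      ∫⁻ y, ‖w x - w y‖ₑ ∂μ ≤ liminf (fun k => ∫⁻ y, ‖v k x - v k y‖ₑ ∂μ) atTop := by
    refine le_trans (lintegral_mono_ae ?_)
      (lintegral_liminf_le fun k => (stronglyMeasurable_const.sub (hv k)).enorm)
    filter_upwards [hvw] with y hy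
    exact (hx.sub hy).enorm.liminf_eq.ge
  have hjoint (k : ℕ) : Measurable fun p : α × α => ‖v k p.1 - v k p.2‖ₑ :=
    (((hv k).comp_measurable measurable_fst).sub ((hv k).comp_measurable measurable_snd)).enorm
  exact (lintegral_mono_ae (hvw.mono hinner)).trans
    (lintegral_liminf_le fun k => (hjoint k).lintegral_prod_right')

end Fatou

section Mollification

open scoped Convolution

variable {E F : Type*} [NormedAddCommGroup E]

variable (E) in
theorem exists_contDiffBump_seq {τ : ℝ} (hτ : 0 < τ) :
    ∃ η : ℕ → ContDiffBump (0 : E), (∀ k, (η k).rOut ≤ τ) ∧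
      Tendsto (fun k => (η k).rOut) atTop (𝓝 0) ∧ ∀ k, (η k).rOut ≤ 2 * (η k).rIn := by
  refine ⟨fun k => ⟨τ / (k + 1) / 2, τ / (k + 1), by positivity, half_lt_self (by positivity)⟩,
    fun k => div_le_self hτ.le (by simp), ?_, fun k => by simp [mul_div_cancel₀]⟩
  simpa using (tendsto_add_atTop_iff_nat 1).2 (tendsto_const_div_atTop_nhds_zero_nat τ)

variable [NormedSpace ℝ E] [HasContDiffBump E] [MeasurableSpace E]
  [NormedAddCommGroup F] [NormedSpace ℝ F] {μ : Measure E} (η : ContDiffBump (0 : E))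

/-- The mollification of `u` by the bump function `η`, normalized to have `μ`-integral one. -/
noncomputable def mollify (μ : Measure E) (η : ContDiffBump (0 : E)) (u : E → F) : E → F :=
  η.normed μ ⋆[ContinuousLinearMap.lsmul ℝ ℝ, μ] u

theorem norm_mollify_le (u : E → F) (x : E) : ‖mollify μ η u x‖ ≤ mollify μ η (‖u ·‖) x := by
  refine (norm_integral_le_integral_norm _).trans_eq (integral_congr_ae (.of_forall fun t => ?_))
  simp [norm_smul, abs_of_nonneg (η.nonneg_normed t)]

variable [FiniteDimensional ℝ E] [BorelSpace E] [μ.IsAddHaarMeasure]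

theorem contDiff_mollify {u : E → F} (hu : LocallyIntegrable u μ) {m : ℕ∞} :
    ContDiff ℝ m (mollify μ η u) :=
  η.hasCompactSupport_normed.contDiff_convolution_left _ η.contDiff_normed hu

theorem continuous_mollify {u : E → F} (hu : LocallyIntegrable u μ) :
    Continuous (mollify μ η u) :=
  (contDiff_mollify η hu (m := 0)).continuous

theorem lintegral_mollify_norm {u : E → F} (hu : Integrable u μ) :
    ∫⁻ x, ENNReal.ofReal (mollify μ η (‖u ·‖) x) ∂μ = ∫⁻ x, ‖u x‖ₑ ∂μ := by
  have hint : ∫ x, mollify μ η (‖u ·‖) x ∂μ = ∫ x, ‖u x‖ ∂μ := by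
    refine (integral_convolution (ContinuousLinearMap.lsmul ℝ ℝ) (η.integrable_normed (μ := μ))
      hu.norm).trans ?_
    rw [η.integral_normed, ContinuousLinearMap.lsmul_apply, one_smul]
  rw [← ofReal_integral_norm_eq_lintegral_enorm hu, ← hint]
  exact (ofReal_integral_eq_lintegral_ofReal
    (η.integrable_normed.integrable_convolution _ hu.norm)
    (.of_forall fun x => (norm_nonneg _).trans (norm_mollify_le η u x))).symm

theorem ae_tendsto_mollify {η : ℕ → ContDiffBump (0 : E)}
    (hη0 : Tendsto (fun k => (η k).rOut) atTop (𝓝 0)) (hη2 : ∀ k, (η k).rOut ≤ 2 * (η k).rIn)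
    [CompleteSpace F] {u : E → F} (hu : LocallyIntegrable u μ) :
    ∀ᵐ x ∂μ, Tendsto (fun k => mollify μ (η k) u x) atTop (𝓝 (u x)) :=
  ContDiffBump.ae_convolution_tendsto_right_of_locallyIntegrable hη0 (.of_forall hη2) hu

theorem limsup_setLIntegral_comp_mollify_mul_le {η : ℕ → ContDiffBump (0 : E)}
    (hη0 : Tendsto (fun k => (η k).rOut) atTop (𝓝 0)) (hη2 : ∀ k, (η k).rOut ≤ 2 * (η k).rIn)
    [CompleteSpace F] {F' : Type*} [NormedAddCommGroup F'] [NormedSpace ℝ F'] [CompleteSpace F']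
    {u : E → F} {G : E → F'} (hu : LocallyIntegrable u μ) (hG : Integrable G μ) {c : F → ℝ}
    (hc : Continuous c) {C : ℝ≥0} (hC : ∀ r, ‖c r‖ₑ ≤ C) {s : Set E} (hs : MeasurableSet s) :
    limsup (fun k => ∫⁻ z in s, ‖c (mollify μ (η k) u z)‖ₑ * ‖mollify μ (η k) G z‖ₑ ∂μ) atTop ≤
      ∫⁻ z in s, ‖c (u z)‖ₑ * ‖G z‖ₑ ∂μ := by
  simp_rw [← lintegral_indicator hs]
  refine limsup_lintegral_le_of_tendsto
    (b := fun k z => C * ENNReal.ofReal (mollify μ (η k) (‖G ·‖) z)) (B := fun z => C * ‖G z‖ₑ)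
    (fun k => ?_) (fun k => ?_) (fun k => .of_forall fun z => ?_) ?_ ?_ ?_ ?_
  · exact (((hc.comp (continuous_mollify (η k) hu)).enorm.measurable.mul
      (continuous_mollify (η k) hG.locallyIntegrable).enorm.measurable).indicator hs).aemeasurable
  · exact ((continuous_mollify (η k) hG.norm.locallyIntegrable).measurable.ennreal_ofReal.const_mul
      _).aemeasurable
  · refine (indicator_le_self _ _ z).trans (mul_le_mul' (hC _) ?_)
    rw [← ofReal_norm]
    exact ENNReal.ofReal_le_ofReal (norm_mollify_le (η k) G z)
  · filter_upwards [ae_tendsto_mollify hη0 hη2 hu,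
      ae_tendsto_mollify hη0 hη2 hG.locallyIntegrable] with z hz hGz
    by_cases hzs : z ∈ s
    · simp only [indicator_of_mem hzs]
      exact ENNReal.Tendsto.mul ((hc.tendsto _).comp hz).enorm (Or.inr enorm_ne_top) hGz.enorm
        (Or.inr enorm_ne_top)
    · simp [indicator_of_notMem hzs]
  · filter_upwards [ae_tendsto_mollify hη0 hη2 hG.norm.locallyIntegrable] with z hz
    rw [← ofReal_norm]
    exact ENNReal.Tendsto.const_mul (ENNReal.tendsto_ofReal hz) (Or.inr ENNReal.coe_ne_top)
  · simp_rw [lintegral_const_mul' _ _ ENNReal.coe_ne_top, lintegral_mollify_norm _ hG]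
    exact tendsto_const_nhds
  · rw [lintegral_const_mul' _ _ ENNReal.coe_ne_top]
    exact ENNReal.mul_ne_top ENNReal.coe_ne_top hG.2.ne

end Mollification

section WeakGradient

variable {n : ℕ} {Ω : Set (En n)} {u : En n → ℝ} {G : En n → En n}

theorem isTest_normed_sub (η : ContDiffBump (0 : En n)) {x : En n}
    (hx : closedBall x η.rOut ⊆ Ω) : IsTest Ω fun t => η.normed volume (x - t) := by
  refine ⟨η.contDiff_normed.comp (contDiff_const.sub contDiff_id),
    η.hasCompactSupport_normed.comp_homeomorph (Homeomorph.subLeft x),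
    (closure_minimal (fun t ht => ?_) isClosed_closedBall).trans hx⟩
  have hmem : x - t ∈ Function.support (η.normed volume) := ht
  rw [η.support_normed_eq, mem_ball_zero_iff] at hmem
  rw [mem_closedBall, dist_comm, dist_eq_norm]
  exact hmem.le

theorem mollify_apply (hG : LocallyIntegrable G) (η : ContDiffBump (0 : En n)) (x : En n)
    (i : Fin n) : mollify volume η G x i = ∫ t, η.normed volume (x - t) * G t i := by
  have hex : ConvolutionExistsAt (η.normed volume) G x (ContinuousLinearMap.lsmul ℝ ℝ) volume :=
    η.hasCompactSupport_normed.convolutionExists_left _ η.continuous_normed hG x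
  rw [mollify, convolution_eq_swap]
  exact ((EuclideanSpace.proj (𝕜 := ℝ) i).integral_comp_comm hex.integrable_swap).symm

theorem fderiv_mollify_apply (hu : LocallyIntegrable u) (η : ContDiffBump (0 : En n))
    (x v : En n) : fderiv ℝ (mollify volume η u) x v =
      ∫ t, fderiv ℝ (η.normed volume) (x - t) v * u t := by
  have hη : ContDiff ℝ 1 (η.normed (volume : Measure (En n))) := η.contDiff_normed
  have hex : ConvolutionExistsAt (fderiv ℝ (η.normed volume)) u x
      ((ContinuousLinearMap.lsmul ℝ ℝ).precompL (En n)) volume :=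
    (η.hasCompactSupport_normed.fderiv (𝕜 := ℝ)).convolutionExists_left _
      (hη.continuous_fderiv one_ne_zero) hu x
  rw [mollify, (η.hasCompactSupport_normed.hasFDerivAt_convolution_left _ hη hu x).fderiv,
    convolution_eq_swap, ContinuousLinearMap.integral_apply hex.integrable_swap]
  rfl

theorem HasWeakGradientOn.fderiv_mollify (hw : HasWeakGradientOn Ω u G)
    (hu : LocallyIntegrable u) (hG : LocallyIntegrable G) (η : ContDiffBump (0 : En n))
    {x : En n} (hx : closedBall x η.rOut ⊆ Ω) :
    fderiv ℝ (mollify volume η u) x = innerSL ℝ (mollify volume η G x) := by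
  have hη : Differentiable ℝ (η.normed (volume : Measure (En n))) :=
    (η.contDiff_normed (n := 1)).differentiable one_ne_zero
  have hreflect (t v : En n) : fderiv ℝ (fun t => η.normed volume (x - t)) t v =
      -fderiv ℝ (η.normed volume) (x - t) v := by
    have := (hη (x - t)).hasFDerivAt.comp t ((hasFDerivAt_id t).const_sub x)
    simp only [Function.comp_def] at this
    simp [this.fderiv]
  have hpartial (i : Fin n) : fderiv ℝ (mollify volume η u) x (EuclideanSpace.single i 1) =
      mollify volume η G x i := by
    have := hw i _ (isTest_normed_sub η hx)
    simp_rw [hreflect, mul_neg, integral_neg, neg_inj] at this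
    rw [fderiv_mollify_apply hu, mollify_apply hG]
    simpa only [mul_comm] using this
  refine ContinuousLinearMap.coe_injective
    ((EuclideanSpace.basisFun (Fin n) ℝ).toBasis.ext fun i => ?_)
  simp [hpartial i, EuclideanSpace.inner_single_right]

theorem HasWeakGradientOn.congr_of_subset (hw : HasWeakGradientOn Ω u G) {U : Set (En n)}
    (hU : U ⊆ Ω) {u' : En n → ℝ} {G' : En n → En n} (hu : ∀ᵐ x, x ∈ U → u' x = u x)
    (hG : ∀ᵐ x, x ∈ U → G' x = G x) : HasWeakGradientOn U u' G' := by
  intro i η hη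
  have hη0 {x : En n} (hx : x ∉ U) : η x = 0 := image_eq_zero_of_notMem_tsupport
    fun h => hx (hη.2.2 h)
  have hDη0 {x : En n} (hx : x ∉ U) : fderiv ℝ η x = 0 := image_eq_zero_of_notMem_tsupport
    fun h => hx (hη.2.2 (tsupport_fderiv_subset ℝ h))
  have hleft : ∀ᵐ x, u' x * fderiv ℝ η x (EuclideanSpace.single i 1) =
      u x * fderiv ℝ η x (EuclideanSpace.single i 1) := by
    filter_upwards [hu] with x hx
    by_cases hxU : x ∈ U
    · rw [hx hxU]
    · simp [hDη0 hxU]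
  have hright : ∀ᵐ x, G' x i * η x = G x i * η x := by
    filter_upwards [hG] with x hx
    by_cases hxU : x ∈ U
    · rw [hx hxU]
    · simp [hη0 hxU]
  rw [integral_congr_ae hleft, integral_congr_ae hright]
  exact hw i η ⟨hη.1, hη.2.1, hη.2.2.trans hU⟩

theorem enorm_fderiv_comp_mollify {φ : ℝ → ℝ} (hφ : Differentiable ℝ φ)
    (hw : HasWeakGradientOn Ω u G) (hu : LocallyIntegrable u) (hG : LocallyIntegrable G)
    (η : ContDiffBump (0 : En n)) {x : En n} (hx : closedBall x η.rOut ⊆ Ω) :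
    ‖fderiv ℝ (φ ∘ mollify volume η u) x‖ₑ =
      ‖deriv φ (mollify volume η u x)‖ₑ * ‖mollify volume η G x‖ₑ := by
  have hdiff := (contDiff_mollify η hu (m := 1)).differentiable one_ne_zero x
  rw [((hφ _).hasDerivAt.comp_hasFDerivAt x hdiff.hasFDerivAt).fderiv, enorm_smul,
    hw.fderiv_mollify hu hG η hx, ← ofReal_norm (innerSL ℝ _), innerSL_apply_norm, ofReal_norm]

variable {s : Set (En n)} {τ : ℝ}

theorem HasWeakGradientOn.lintegral_lintegral_enorm_sub_le (hw : HasWeakGradientOn Ω u G)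
    (hu : Integrable u) (hG : Integrable G) {φ : ℝ → ℝ} (hφ : ContDiff ℝ 1 φ) {C : ℝ≥0}
    (hC : ∀ r, ‖deriv φ r‖ₑ ≤ C) (hs : Convex ℝ s) (hsm : MeasurableSet s)
    (hbdd : Bornology.IsBounded s) (hτ : 0 < τ) (hsΩ : ∀ x ∈ s, closedBall x τ ⊆ Ω) :
    ∫⁻ x in s, ∫⁻ y in s, ‖φ (u x) - φ (u y)‖ₑ ≤
      ediam s * (2 ^ n * volume s * ∫⁻ z in s, ‖deriv φ (u z)‖ₑ * ‖G z‖ₑ) := by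
  obtain ⟨η, hηle, hη0, hη2⟩ := exists_contDiffBump_seq (En n) hτ
  have hul := hu.locallyIntegrable
  have hGl := hG.locallyIntegrable
  set K := ediam s * (2 ^ n * volume s) with hK
  have hKtop : K ≠ ⊤ := by
    have := hbdd.measure_lt_top (μ := volume)
    finiteness [hbdd.ediam_ne_top]
  calc ∫⁻ x in s, ∫⁻ y in s, ‖φ (u x) - φ (u y)‖ₑ
      ≤ liminf (fun k => ∫⁻ x in s, ∫⁻ y in s, ‖φ (mollify volume (η k) u x) -
          φ (mollify volume (η k) u y)‖ₑ) atTop := by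
        refine lintegral_lintegral_enorm_sub_le_liminf (fun k => (hφ.continuous.comp
          (continuous_mollify (η k) hul)).stronglyMeasurable) (ae_restrict_of_ae ?_)
        exact (ae_tendsto_mollify hη0 hη2 hul).mono fun x hx => (hφ.continuous.tendsto _).comp hx
    _ ≤ limsup (fun k => K * ∫⁻ z in s, ‖deriv φ (mollify volume (η k) u z)‖ₑ *
          ‖mollify volume (η k) G z‖ₑ) atTop := by
        refine (liminf_le_liminf (.of_forall fun k => ?_)).trans liminf_le_limsup
        rw [← setLIntegral_congr_fun hsm fun z hz => enorm_fderiv_comp_mollify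
          (hφ.differentiable one_ne_zero) hw hul hGl (η k)
          ((closedBall_subset_closedBall (hηle k)).trans (hsΩ z hz)), hK, mul_assoc]
        simpa using lintegral_lintegral_enorm_sub_le_of_contDiff volume
          (hφ.comp (contDiff_mollify (η k) hul (m := 1))) hs hsm hbdd
    _ ≤ K * ∫⁻ z in s, ‖deriv φ (u z)‖ₑ * ‖G z‖ₑ := by
        rw [ENNReal.limsup_const_mul_of_ne_top hKtop]
        gcongr
        exact limsup_setLIntegral_comp_mollify_mul_le hη0 hη2 hul hG
          (hφ.continuous_deriv le_rfl) hC hsm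
    _ = _ := by rw [hK, mul_assoc]

theorem ediam_closedBall_le_ofReal {X : Type*} [PseudoMetricSpace X] (x : X) (r : ℝ) :
    ediam (closedBall x r) ≤ 2 * ENNReal.ofReal r := by
  rcases lt_or_ge r 0 with hr | hr
  · simp [closedBall_eq_empty.2 hr]
  · rw [← Metric.closedEBall_ofReal hr]
    exact ediam_closedEBall_le

theorem HasWeakGradientOn.lintegral_ball_lintegral_ball_enorm_sub_le
    (hw : HasWeakGradientOn Ω u G) (hΩ : IsOpen Ω) (hu : Integrable u) (hG : Integrable G)
    {φ : ℝ → ℝ} (hφ : ContDiff ℝ 1 φ) {C : ℝ≥0} (hC : ∀ r, ‖deriv φ r‖ₑ ≤ C) {x : En n} {r : ℝ}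
    (hx : closedBall x r ⊆ Ω) :
    ∫⁻ y in ball x r, ∫⁻ z in ball x r, ‖φ (u y) - φ (u z)‖ₑ ≤
      ENNReal.ofReal (2 * r) *
        (2 ^ n * volume (ball x r) * ∫⁻ z in ball x r, ‖deriv φ (u z)‖ₑ * ‖G z‖ₑ) := by
  obtain ⟨τ, hτ, hτΩ⟩ := (isCompact_closedBall x r).exists_cthickening_subset_open hΩ hx
  refine (hw.lintegral_lintegral_enorm_sub_le hu hG hφ hC (convex_ball x r) measurableSet_ball
    isBounded_ball hτ fun y hy => ?_).trans ?_
  · exact (closedBall_subset_cthickening (ball_subset_closedBall hy) τ).trans hτΩ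
  · gcongr
    rw [ENNReal.ofReal_mul zero_le_two, ENNReal.ofReal_ofNat]
    exact (ediam_mono ball_subset_closedBall).trans (ediam_closedBall_le_ofReal x r)

end WeakGradient

section Cutoff

theorem hasCompactSupport_deriv_smoothTransition :
    HasCompactSupport (deriv Real.smoothTransition) := by
  refine HasCompactSupport.intro (isCompact_Icc (a := 0) (b := 1)) fun s hs => ?_
  rw [mem_Icc, not_and_or, not_le, not_le] at hs
  rcases hs with hs | hs
  · have : Real.smoothTransition =ᶠ[𝓝 s] fun _ => 0 := by
      filter_upwards [Iio_mem_nhds hs] with y hy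
      exact Real.smoothTransition.zero_of_nonpos (mem_Iio.1 hy).le
    rw [this.deriv_eq, deriv_const]
  · have : Real.smoothTransition =ᶠ[𝓝 s] fun _ => 1 := by
      filter_upwards [Ioi_mem_nhds hs] with y hy
      exact Real.smoothTransition.one_of_one_le (mem_Ioi.1 hy).le
    rw [this.deriv_eq, deriv_const]

theorem exists_lipschitzWith_smoothTransition : ∃ C, LipschitzWith C Real.smoothTransition := by
  have hS : ContDiff ℝ 1 Real.smoothTransition := Real.smoothTransition.contDiff
  obtain ⟨C, hC⟩ := hasCompactSupport_deriv_smoothTransition.exists_bound_of_continuous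
    (hS.continuous_deriv le_rfl)
  exact ⟨C.toNNReal, lipschitzWith_of_nnnorm_deriv_le (hS.differentiable one_ne_zero) fun s =>
    NNReal.coe_le_coe.1 ((hC s).trans (Real.le_coe_toNNReal C))⟩

/-- A smooth approximation, as `δ → 0`, of the indicator function of `{s | t < |s|}`. -/
noncomputable def levelCutoff (t δ s : ℝ) : ℝ := Real.smoothTransition ((|s| - t) / δ)

variable {t δ s : ℝ}

theorem levelCutoff_eq_zero (hδ : 0 < δ) (hs : |s| ≤ t) : levelCutoff t δ s = 0 :=
  Real.smoothTransition.zero_of_nonpos (div_nonpos_of_nonpos_of_nonneg (by linarith) hδ.le)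

theorem levelCutoff_eq_one (hδ : 0 < δ) (hs : t + δ ≤ |s|) : levelCutoff t δ s = 1 :=
  Real.smoothTransition.one_of_one_le ((one_le_div hδ).2 (by linarith))

theorem contDiff_levelCutoff (ht : 0 < t) (hδ : 0 < δ) : ContDiff ℝ 1 (levelCutoff t δ) := by
  refine contDiff_iff_contDiffAt.2 fun s => ?_
  obtain rfl | hs := eq_or_ne s 0
  · refine contDiffAt_const (c := (0 : ℝ)) |>.congr_of_eventuallyEq ?_
    filter_upwards [continuous_abs.tendsto' (0 : ℝ) 0 abs_zero |>.eventually_lt_const ht] with s hs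
    exact levelCutoff_eq_zero hδ hs.le
  · exact Real.smoothTransition.contDiff.contDiffAt.comp s
      (((contDiffAt_abs hs).sub contDiffAt_const).div_const δ)

theorem deriv_levelCutoff_eq_zero (hδ : 0 < δ) (hs : δ < |(|s| - t)|) :
    deriv (levelCutoff t δ) s = 0 := by
  rcases lt_abs.1 hs with h | h
  · have : levelCutoff t δ =ᶠ[𝓝 s] fun _ => 1 := by
      filter_upwards [(continuous_abs.tendsto s).eventually_const_lt
        (show t + δ < |s| by linarith)] with y hy
      exact levelCutoff_eq_one hδ hy.le
    rw [this.deriv_eq, deriv_const]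
  · have : levelCutoff t δ =ᶠ[𝓝 s] fun _ => 0 := by
      filter_upwards [(continuous_abs.tendsto s).eventually_lt_const
        (show |s| < t by linarith)] with y hy
      exact levelCutoff_eq_zero hδ hy.le
    rw [this.deriv_eq, deriv_const]

theorem lipschitzWith_levelCutoff {C : ℝ≥0} (hC : LipschitzWith C Real.smoothTransition)
    (hδ : 0 < δ) : LipschitzWith (C / δ.toNNReal) (levelCutoff t δ) := by
  refine LipschitzWith.of_dist_le_mul fun r s => (hC.dist_le_mul _ _).trans ?_
  rw [Real.dist_eq, Real.dist_eq, ← sub_div, sub_sub_sub_cancel_right, abs_div, abs_of_pos hδ,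
    NNReal.coe_div, Real.coe_toNNReal δ hδ.le, mul_div_assoc', div_mul_eq_mul_div]
  gcongr C * ?_ / δ
  exact abs_abs_sub_abs_le r s

theorem enorm_deriv_levelCutoff_le {C : ℝ≥0} (hC : LipschitzWith C Real.smoothTransition)
    (hδ : 0 < δ) (s : ℝ) : ‖deriv (levelCutoff t δ) s‖ₑ ≤ (C / δ.toNNReal : ℝ≥0) :=
  enorm_le_coe.2 <| NNReal.coe_le_coe.1 <|
    norm_deriv_le_of_lipschitz (lipschitzWith_levelCutoff hC hδ)

theorem continuous_levelCutoff (t δ : ℝ) : Continuous (levelCutoff t δ) :=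
  Real.smoothTransition.continuous.comp ((continuous_abs.sub continuous_const).div_const δ)

theorem tendsto_levelCutoff (t s : ℝ) : Tendsto (fun δ => levelCutoff t δ s) (𝓝[>] 0)
    (𝓝 ({r | t < |r|}.indicator 1 s)) := by
  refine tendsto_const_nhds.congr' ?_
  by_cases hs : t < |s|
  · filter_upwards [Ioc_mem_nhdsGT (sub_pos.2 hs)] with δ hδ
    rw [levelCutoff_eq_one hδ.1 (by linarith [hδ.2]), indicator_of_mem (by exact hs), Pi.one_apply]
  · filter_upwards [self_mem_nhdsWithin] with δ hδ
    rw [levelCutoff_eq_zero hδ (not_lt.1 hs), indicator_of_notMem (by exact hs)]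

end Cutoff

section LayerMeasure

variable {α : Type*} [MeasurableSpace α]

/-- The restriction of `κ` to the layer `{x | |v x - t| ≤ δ}`, divided by `δ`. If `κ` has density
`|∇v|`, this approximates the perimeter measure of `{x | t < v x}` as `δ → 0`. -/
noncomputable def layerMeasure (κ : Measure α) (v : α → ℝ) (t δ : ℝ) : Measure α :=
  (ENNReal.ofReal δ)⁻¹ • κ.restrict (v ⁻¹' closedBall t δ)

theorem layerMeasure_univ (κ : Measure α) {v : α → ℝ} (hv : Measurable v) (t : ℝ) {δ : ℝ} :
    layerMeasure κ v t δ univ = 2 * (κ.map v (closedBall t δ) / volume (closedBall t δ)) := by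
  rw [layerMeasure, Measure.smul_apply, smul_eq_mul, Measure.restrict_apply_univ,
    Measure.map_apply hv measurableSet_closedBall, Real.volume_closedBall,
    ENNReal.ofReal_mul zero_le_two, ENNReal.ofReal_ofNat, ENNReal.div_eq_inv_mul,
    ENNReal.mul_inv (Or.inl two_ne_zero) (Or.inl ENNReal.ofNat_ne_top), ← mul_assoc, ← mul_assoc,
    ENNReal.mul_inv_cancel two_ne_zero ENNReal.ofNat_ne_top, one_mul]

theorem exists_tendsto_layerMeasure (κ : Measure α) [IsFiniteMeasure κ] {v : α → ℝ}
    (hv : Measurable v) {a b : ℝ} (hab : a < b) :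
    ∃ t ∈ Ioo a b, ∃ D ≤ 2 * (κ univ / ENNReal.ofReal (b - a)),
      Tendsto (fun δ => layerMeasure κ v t δ univ) (𝓝[>] 0) (𝓝 D) := by
  set ν := κ.map v
  have hgood : ∀ᵐ t ∂volume.restrict (Ioo a b), t ∈ Ioo a b ∧
      Tendsto (fun δ => ν (closedBall t δ) / volume (closedBall t δ)) (𝓝[>] 0)
        (𝓝 (ν.rnDeriv volume t)) := by
    filter_upwards [ae_restrict_of_ae (Besicovitch.ae_tendsto_rnDeriv ν volume),
      ae_restrict_mem measurableSet_Ioo] with t htendsto ht using ⟨ht, htendsto⟩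
  have hne : volume.restrict (Ioo a b) ≠ 0 := by simpa using hab
  obtain ⟨t, ht, hle⟩ := exists_notMem_null_le_laverage hne
    (Measure.measurable_rnDeriv ν volume).aemeasurable hgood
  obtain ⟨htab, htendsto⟩ : t ∈ Ioo a b ∧ _ := not_not.1 ht
  refine ⟨t, htab, 2 * ν.rnDeriv volume t, ?_, ?_⟩
  · refine mul_le_mul_right (hle.trans ?_) 2
    rw [laverage_eq, Measure.restrict_apply_univ, Real.volume_Ioo]
    gcongr
    calc ∫⁻ t in Ioo a b, ν.rnDeriv volume t ≤ ν (Ioo a b) := Measure.setLIntegral_rnDeriv_le _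
      _ ≤ ν univ := measure_mono (subset_univ _)
      _ = κ univ := by rw [Measure.map_apply hv .univ, preimage_univ]
  · simp_rw [layerMeasure_univ κ hv]
    exact ENNReal.Tendsto.const_mul htendsto (Or.inr ENNReal.ofNat_ne_top)

theorem setLIntegral_deriv_levelCutoff_mul_le {F : Type*} [NormedAddCommGroup F] {μ : Measure α}
    {u : α → ℝ} (hu : Measurable u) (G : α → F) {C : ℝ≥0}
    (hC : LipschitzWith C Real.smoothTransition) (t : ℝ) {δ : ℝ} (hδ : 0 < δ) {s : Set α}
    (hs : MeasurableSet s) :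
    ∫⁻ z in s, ‖deriv (levelCutoff t δ) (u z)‖ₑ * ‖G z‖ₑ ∂μ ≤
      C * layerMeasure (μ.withDensity (‖G ·‖ₑ)) (|u ·|) t δ s := by
  set L := (|u ·|) ⁻¹' closedBall t δ
  have hL : MeasurableSet L := hu.abs measurableSet_closedBall
  calc ∫⁻ z in s, ‖deriv (levelCutoff t δ) (u z)‖ₑ * ‖G z‖ₑ ∂μ
      ≤ ∫⁻ z in s, L.indicator (fun z => (C / δ.toNNReal : ℝ≥0) * ‖G z‖ₑ) z ∂μ := by
        refine lintegral_mono fun z => ?_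
        by_cases hz : z ∈ L
        · rw [indicator_of_mem hz]
          gcongr
          exact enorm_deriv_levelCutoff_le hC hδ _
        · simp [deriv_levelCutoff_eq_zero hδ (not_le.1 hz)]
    _ = (C / δ.toNNReal : ℝ≥0) * ∫⁻ z in s ∩ L, ‖G z‖ₑ ∂μ := by
        rw [lintegral_indicator hL, Measure.restrict_restrict hL, inter_comm,
          lintegral_const_mul' _ _ ENNReal.coe_ne_top]
    _ = C * layerMeasure (μ.withDensity (‖G ·‖ₑ)) (|u ·|) t δ s := by
        rw [layerMeasure, Measure.smul_apply, Measure.restrict_apply hs,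
          withDensity_apply _ (hs.inter hL), smul_eq_mul, ← mul_assoc, ENNReal.coe_div (by simpa),
          ENNReal.ofReal, div_eq_mul_inv]

theorem measure_inter_mul_measure_diff_le {s E : Set α} (μ : Measure α) (hs : MeasurableSet s)
    (hE : MeasurableSet E) : μ (s ∩ E) * μ (s \ E) ≤
      ∫⁻ x in s, ∫⁻ y in s, ‖E.indicator (1 : α → ℝ) x - E.indicator 1 y‖ₑ ∂μ ∂μ := by
  calc μ (s ∩ E) * μ (s \ E) = ∫⁻ _ in s ∩ E, ∫⁻ _ in s \ E, 1 ∂μ ∂μ := by simp [mul_comm]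
    _ ≤ ∫⁻ x in s ∩ E, ∫⁻ y in s \ E, ‖E.indicator (1 : α → ℝ) x - E.indicator 1 y‖ₑ ∂μ ∂μ := by
        refine setLIntegral_mono' (hs.inter hE) fun x hx =>
          setLIntegral_mono' (hs.diff hE) fun y hy => ?_
        simp [indicator_of_mem hx.2, indicator_of_notMem hy.2]
    _ ≤ _ := (lintegral_mono fun x => lintegral_mono_set sdiff_subset).trans
        (lintegral_mono_set inter_subset_left)

end LayerMeasure

section RelativeIsoperimetric

variable {n : ℕ} {Ω : Set (En n)} {u : En n → ℝ} {G : En n → En n} {x : En n} {r : ℝ}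

theorem HasWeakGradientOn.volume_inter_mul_volume_diff_le (hw : HasWeakGradientOn Ω u G)
    (hΩ : IsOpen Ω) (hum : Measurable u) (hu : Integrable u) (hG : Integrable G) {C : ℝ≥0}
    (hC : LipschitzWith C Real.smoothTransition) {t : ℝ} (ht : 0 < t) {δ : ℕ → ℝ}
    (hδ : Tendsto δ atTop (𝓝[>] 0)) (hx : closedBall x r ⊆ Ω) :
    volume (ball x r ∩ {y | t < |u y|}) * volume (ball x r \ {y | t < |u y|}) ≤
      ENNReal.ofReal (2 * r) * (2 ^ n * volume (ball x r)) * (C * liminf (fun k =>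
        layerMeasure (volume.withDensity (‖G ·‖ₑ)) (|u ·|) t (δ k) (ball x r)) atTop) := by
  have hKtop : ENNReal.ofReal (2 * r) * (2 ^ n * volume (ball x r)) * C ≠ ⊤ := by
    finiteness [measure_ball_lt_top (μ := volume) (x := x) (r := r)]
  calc volume (ball x r ∩ {y | t < |u y|}) * volume (ball x r \ {y | t < |u y|})
      ≤ ∫⁻ y in ball x r, ∫⁻ z in ball x r,
          ‖{y | t < |u y|}.indicator (1 : En n → ℝ) y - {y | t < |u y|}.indicator 1 z‖ₑ :=
        measure_inter_mul_measure_diff_le volume measurableSet_ball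
          (measurableSet_lt measurable_const hum.abs)
    _ ≤ liminf (fun k => ∫⁻ y in ball x r, ∫⁻ z in ball x r,
          ‖levelCutoff t (δ k) (u y) - levelCutoff t (δ k) (u z)‖ₑ) atTop :=
        lintegral_lintegral_enorm_sub_le_liminf
          (fun k => ((continuous_levelCutoff t (δ k)).measurable.comp hum).stronglyMeasurable)
          (.of_forall fun y => (tendsto_levelCutoff t (u y)).comp hδ)
    _ ≤ liminf (fun k => ENNReal.ofReal (2 * r) * (2 ^ n * volume (ball x r)) * C *
          layerMeasure (volume.withDensity (‖G ·‖ₑ)) (|u ·|) t (δ k) (ball x r)) atTop := by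
        refine liminf_le_liminf ?_
        filter_upwards [hδ self_mem_nhdsWithin] with k hk
        refine (hw.lintegral_ball_lintegral_ball_enorm_sub_le hΩ hu hG (contDiff_levelCutoff ht hk)
          (enorm_deriv_levelCutoff_le hC hk) hx).trans ?_
        rw [← mul_assoc, mul_assoc _ (C : ℝ≥0∞)]
        gcongr
        exact setLIntegral_deriv_levelCutoff_mul_le hum G hC t hk measurableSet_ball
    _ = _ := by rw [ENNReal.liminf_const_mul_of_ne_top hKtop, mul_assoc]

end RelativeIsoperimetric

section StoppingRadius

theorem measure_le_two_mul_measure_diff {α : Type*} [MeasurableSpace α] {μ : Measure α}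
    {B E : Set α} (hE : MeasurableSet E) (hB : μ B ≠ ⊤) (h : 2 * μ (B ∩ E) ≤ μ B) :
    μ B ≤ 2 * μ (B \ E) := by
  have hadd : μ (B ∩ E) + μ (B \ E) = μ B := measure_inter_add_sdiff B hE
  rw [← hadd, two_mul] at h
  have hle : μ (B ∩ E) ≤ μ (B \ E) :=
    (ENNReal.add_le_add_iff_left (measure_ne_top_of_subset inter_subset_left hB)).1 h
  rw [← hadd, two_mul]
  gcongr

variable {V : Type*} [NormedAddCommGroup V] [NormedSpace ℝ V] [FiniteDimensional ℝ V]
  [MeasurableSpace V] [BorelSpace V] (μ : Measure V) [μ.IsAddHaarMeasure]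

theorem addHaar_ball_two_mul (x : V) (r : ℝ) :
    μ (ball x (2 * r)) = 2 ^ Module.finrank ℝ V * μ (ball x r) := by
  rw [Measure.addHaar_ball_mul_of_pos μ x two_pos, ENNReal.ofReal_pow zero_le_two,
    ENNReal.ofReal_ofNat, Measure.addHaar_ball_center μ x r]

theorem exists_stopping_radius {E : Set V} (hE : MeasurableSet E) (x : V) {r R : ℝ} (hr : 0 < r)
    (hrR : r ≤ R) (h : 2 * μ E ≤ μ (ball x (R / 2))) :
    ∃ ρ ∈ Icc r R, μ (ball x ρ) ≤ 2 * μ (ball x ρ \ E) ∧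
      (ρ = r ∨ μ (ball x ρ) ≤ 2 ^ (Module.finrank ℝ V + 1) * μ (ball x ρ ∩ E)) := by
  classical
  let P (j : ℕ) : Prop := 2 * μ (ball x (2 ^ j * r) ∩ E) ≤ μ (ball x (2 ^ j * r))
  obtain ⟨j, hjR, hRj⟩ := exists_nat_pow_near ((one_le_div hr).2 hrR) one_lt_two
  rw [le_div_iff₀ hr] at hjR
  rw [div_lt_iff₀ hr, pow_succ] at hRj
  have hj : P j := calc
    2 * μ (ball x (2 ^ j * r) ∩ E) ≤ 2 * μ E := by gcongr; exact inter_subset_right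
    _ ≤ μ (ball x (R / 2)) := h
    _ ≤ μ (ball x (2 ^ j * r)) := measure_mono (ball_subset_ball (by linarith))
  have hex : ∃ j, P j := ⟨j, hj⟩
  refine ⟨2 ^ Nat.find hex * r, ⟨le_mul_of_one_le_left hr.le (one_le_pow₀ one_le_two), ?_⟩,
    measure_le_two_mul_measure_diff hE measure_ball_lt_top.ne (Nat.find_spec hex), ?_⟩
  · refine le_trans ?_ hjR
    gcongr
    exacts [one_le_two, Nat.find_min' hex hj]
  · rcases hi : Nat.find hex with _ | i
    · simp
    · right
      have hPi : ¬ P i := Nat.find_min hex (by omega)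
      rw [pow_succ', mul_assoc]
      calc μ (ball x (2 * (2 ^ i * r))) = 2 ^ Module.finrank ℝ V * μ (ball x (2 ^ i * r)) :=
            addHaar_ball_two_mul μ x _
        _ ≤ 2 ^ Module.finrank ℝ V * (2 * μ (ball x (2 ^ i * r) ∩ E)) := by
            gcongr
            exact (not_le.1 hPi).le
        _ ≤ 2 ^ Module.finrank ℝ V * (2 * μ (ball x (2 * (2 ^ i * r)) ∩ E)) := by
            gcongr _ * (2 * μ (?_ ∩ E))
            exact ball_subset_ball (le_mul_of_one_le_left (by positivity) one_le_two)
        _ = _ := by rw [pow_succ, mul_assoc]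

end StoppingRadius

section BallEstimates

theorem mul_measure_univ_mul_measure_le_lintegral {α F : Type*} [MeasurableSpace α]
    [NormedAddCommGroup F] [MeasurableSpace F] [OpensMeasurableSpace F] {μ : Measure α}
    [IsFiniteMeasure μ] {u : α → F} (hu : Measurable u) {l : ℝ≥0∞} (hl : l ≠ ⊤)
    (h : 2 * l * μ univ ≤ ∫⁻ x, ‖u x‖ₑ ∂μ) :
    l * μ univ * μ {y | ‖u y‖ₑ ≤ l} ≤ ∫⁻ y, ∫⁻ x, ‖u y - u x‖ₑ ∂μ ∂μ := by
  have hpoint (y : α) (hy : ‖u y‖ₑ ≤ l) : l * μ univ ≤ ∫⁻ x, ‖u y - u x‖ₑ ∂μ := by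
    have hle : l * μ univ + l * μ univ ≤ ∫⁻ x, ‖u y - u x‖ₑ ∂μ + l * μ univ := calc
      l * μ univ + l * μ univ = 2 * l * μ univ := by ring
      _ ≤ ∫⁻ x, ‖u x‖ₑ ∂μ := h
      _ ≤ ∫⁻ x, (‖u y - u x‖ₑ + l) ∂μ := by
          refine lintegral_mono fun x => ?_
          calc ‖u x‖ₑ = ‖u y - (u y - u x)‖ₑ := by rw [sub_sub_cancel]
            _ ≤ ‖u y‖ₑ + ‖u y - u x‖ₑ := enorm_sub_le
            _ ≤ ‖u y - u x‖ₑ + l := by rw [add_comm]; gcongr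
      _ = ∫⁻ x, ‖u y - u x‖ₑ ∂μ + l * μ univ := by
          rw [lintegral_add_right _ measurable_const, lintegral_const]
    exact (ENNReal.add_le_add_iff_right (by finiteness)).1 hle
  calc l * μ univ * μ {y | ‖u y‖ₑ ≤ l} = ∫⁻ _ in {y | ‖u y‖ₑ ≤ l}, l * μ univ ∂μ := by
        rw [setLIntegral_const]
    _ ≤ ∫⁻ y in {y | ‖u y‖ₑ ≤ l}, ∫⁻ x, ‖u y - u x‖ₑ ∂μ ∂μ :=
        setLIntegral_mono' (measurableSet_le hu.enorm measurable_const) hpoint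
    _ ≤ _ := setLIntegral_le_lintegral _ _

variable {n : ℕ} {Ω : Set (En n)} {u : En n → ℝ} {G : En n → En n} {x : En n} {r : ℝ}

theorem HasWeakGradientOn.lintegral_ball_lintegral_ball_enorm_sub_le_lintegral
    (hw : HasWeakGradientOn Ω u G) (hΩ : IsOpen Ω) (hu : Integrable u) (hG : Integrable G)
    (hx : closedBall x r ⊆ Ω) :
    ∫⁻ y in ball x r, ∫⁻ z in ball x r, ‖u y - u z‖ₑ ≤
      ENNReal.ofReal (2 * r) * (2 ^ n * volume (ball x r) * ∫⁻ z in ball x r, ‖G z‖ₑ) := by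
  simpa using hw.lintegral_ball_lintegral_ball_enorm_sub_le hΩ hu hG (φ := id) contDiff_id
    (C := 1) (by simp) hx

theorem HasWeakGradientOn.mul_volume_ball_le (hw : HasWeakGradientOn Ω u G) (hΩ : IsOpen Ω)
    (hum : Measurable u) (hu : Integrable u) (hG : Integrable G) (hx : closedBall x r ⊆ Ω)
    (hr : 0 < r) {l : ℝ≥0∞} (hl : l ≠ ⊤)
    (hmean : 2 * l * volume (ball x r) ≤ ∫⁻ y in ball x r, ‖u y‖ₑ)
    (hsmall : volume (ball x r) ≤ 2 * volume (ball x r ∩ {y | ‖u y‖ₑ ≤ l})) :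
    l * volume (ball x r) ≤ 2 * ENNReal.ofReal (2 * r) * 2 ^ n * ∫⁻ z in ball x r, ‖G z‖ₑ := by
  have hm : MeasurableSet {y | ‖u y‖ₑ ≤ l} := measurableSet_le hum.enorm measurable_const
  have : IsFiniteMeasure (volume.restrict (ball x r)) :=
    isFiniteMeasure_restrict.2 measure_ball_lt_top.ne
  have hosc : l * volume (ball x r) * volume (ball x r ∩ {y | ‖u y‖ₑ ≤ l}) ≤
      ∫⁻ y in ball x r, ∫⁻ z in ball x r, ‖u y - u z‖ₑ := by
    have := mul_measure_univ_mul_measure_le_lintegral (μ := volume.restrict (ball x r)) hum hl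
      (by rwa [Measure.restrict_apply_univ])
    rwa [Measure.restrict_apply_univ, Measure.restrict_apply hm, inter_comm] at this
  refine (ENNReal.mul_le_mul_iff_right (measure_ball_pos volume x hr).ne'
    measure_ball_lt_top.ne).1 ?_
  calc volume (ball x r) * (l * volume (ball x r))
      ≤ 2 * volume (ball x r ∩ {y | ‖u y‖ₑ ≤ l}) * (l * volume (ball x r)) := by gcongr
    _ = 2 * (l * volume (ball x r) * volume (ball x r ∩ {y | ‖u y‖ₑ ≤ l})) := by ring
    _ ≤ 2 * (ENNReal.ofReal (2 * r) * (2 ^ n * volume (ball x r) * ∫⁻ z in ball x r, ‖G z‖ₑ)) :=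
        mul_le_mul_right (hosc.trans
          (hw.lintegral_ball_lintegral_ball_enorm_sub_le_lintegral hΩ hu hG hx)) 2
    _ = volume (ball x r) * (2 * ENNReal.ofReal (2 * r) * 2 ^ n * ∫⁻ z in ball x r, ‖G z‖ₑ) := by
        ring

theorem HasWeakGradientOn.volume_ball_le_liminf_layerMeasure (hw : HasWeakGradientOn Ω u G)
    (hΩ : IsOpen Ω) (hum : Measurable u) (hu : Integrable u) (hG : Integrable G) {C : ℝ≥0}
    (hC : LipschitzWith C Real.smoothTransition) {t : ℝ} (ht : 0 < t) {δ : ℕ → ℝ}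
    (hδ : Tendsto δ atTop (𝓝[>] 0)) (hx : closedBall x r ⊆ Ω) (hr : 0 < r) {a b : ℝ≥0∞}
    (ha : volume (ball x r) ≤ a * volume (ball x r ∩ {y | t < |u y|}))
    (hb : volume (ball x r) ≤ b * volume (ball x r \ {y | t < |u y|})) :
    volume (ball x r) ≤ a * b * ENNReal.ofReal (2 * r) * 2 ^ n * (C * liminf (fun k =>
      layerMeasure (volume.withDensity (‖G ·‖ₑ)) (|u ·|) t (δ k) (ball x r)) atTop) := by
  refine (ENNReal.mul_le_mul_iff_right (measure_ball_pos volume x hr).ne'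
    measure_ball_lt_top.ne).1 ?_
  calc volume (ball x r) * volume (ball x r)
      ≤ (a * volume (ball x r ∩ {y | t < |u y|})) * (b * volume (ball x r \ {y | t < |u y|})) :=
        mul_le_mul' ha hb
    _ = a * b * (volume (ball x r ∩ {y | t < |u y|}) *
          volume (ball x r \ {y | t < |u y|})) := by ring
    _ ≤ a * b * _ :=
        mul_le_mul_right (hw.volume_inter_mul_volume_diff_le hΩ hum hu hG hC ht hδ hx) _
    _ = _ := by ring

end BallEstimates

section SphericalContent

variable {X : Type*} [PseudoMetricSpace X] {m : ℕ} {A B : Set X}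

/-- The `m`-dimensional spherical Hausdorff content of `A`: the infimum of `∑ ρᵢ ^ m` over the
countable covers of `A` by closed balls of radii `ρᵢ`. -/
noncomputable def sphericalContent (m : ℕ) (A : Set X) : ℝ≥0∞ :=
  ⨅ (s : Set X) (ρ : X → ℝ) (_ : s.Countable) (_ : A ⊆ ⋃ x : s, closedBall (x : X) (ρ x)),
    ∑' x : s, ENNReal.ofReal (ρ x) ^ m

theorem sphericalContent_mono (h : A ⊆ B) : sphericalContent m A ≤ sphericalContent m B :=
  iInf₂_mono fun _ _ => iInf_mono fun _ => iInf_mono' fun hB => ⟨h.trans hB, le_rfl⟩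

theorem exists_cover_of_sphericalContent_lt {ε : ℝ≥0∞} (h : sphericalContent m A < ε) :
    ∃ (s : Set X) (ρ : X → ℝ), s.Countable ∧ A ⊆ ⋃ x : s, closedBall (x : X) (ρ x) ∧
      ∑' x : s, ENNReal.ofReal (ρ x) ^ m < ε := by
  simpa only [sphericalContent, iInf_lt_iff, exists_prop] using h

theorem sphericalContent_le_of_forall_pow_le [SecondCountableTopology X] [MeasurableSpace X]
    [OpensMeasurableSpace X] {R : ℝ} {K : ℝ≥0∞} (ν : ℕ → Measure X)
    (h : ∀ x ∈ A, ∃ ρ ∈ Ioc 0 R,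
      ENNReal.ofReal ρ ^ m ≤ K * liminf (fun k => ν k (ball x ρ)) atTop) :
    sphericalContent m A ≤ 5 ^ m * (K * liminf (fun k => ν k univ) atTop) := by
  choose! ρ hρ hle using h
  obtain ⟨s, hsA, hdisj, hcov⟩ := Vitali.exists_disjoint_subfamily_covering_enlargement_closedBall
    A id ρ R (fun x hx => (hρ x hx).2) 5 (by norm_num)
  have hdisj' : s.PairwiseDisjoint fun x => ball x (ρ x) := fun x hx y hy hxy =>
    (hdisj hx hy hxy).mono ball_subset_closedBall ball_subset_closedBall
  have hs : s.Countable := hdisj'.countable_of_isOpen (fun x _ => isOpen_ball)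
    fun x hx => ⟨x, mem_ball_self (hρ x (hsA hx)).1⟩
  have : Countable s := hs.to_subtype
  have hA : A ⊆ ⋃ x : s, closedBall (x : X) (5 * ρ x) := fun x hx => by
    obtain ⟨y, hy, hxy⟩ := hcov x hx
    exact mem_iUnion.2 ⟨⟨y, hy⟩, hxy (mem_closedBall_self (hρ x hx).1.le)⟩
  calc sphericalContent m A ≤ ∑' x : s, ENNReal.ofReal (5 * ρ x) ^ m :=
        iInf₂_le_of_le s (fun x => 5 * ρ x) (iInf₂_le hs hA)
    _ = 5 ^ m * ∑' x : s, ENNReal.ofReal (ρ x) ^ m := by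
        simp_rw [ENNReal.ofReal_mul (show (0 : ℝ) ≤ 5 by norm_num), mul_pow, ENNReal.ofReal_ofNat,
          ENNReal.tsum_mul_left]
    _ ≤ 5 ^ m * ∑' x : s, K * liminf (fun k => ν k (ball x (ρ x))) atTop := by
        gcongr with x
        exact hle x (hsA x.2)
    _ = 5 ^ m * (K * ∑' x : s, liminf (fun k => ν k (ball x (ρ x))) atTop) := by
        rw [ENNReal.tsum_mul_left]
    _ ≤ 5 ^ m * (K * liminf (fun k => ν k univ) atTop) := by
        gcongr
        refine (tsum_liminf_le _).trans (liminf_le_liminf (.of_forall fun k => ?_))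
        exact tsum_measure_le_measure_univ (fun x => measurableSet_ball.nullMeasurableSet)
          fun x y hxy => (hdisj' x.2 y.2 (Subtype.coe_ne_coe.2 hxy)).aedisjoint

theorem hausdorffMeasure_eq_zero_of_sphericalContent_eq_zero {X : Type*} [MetricSpace X]
    [MeasurableSpace X] [BorelSpace X] {A : Set X} (hm : m ≠ 0) (hA : sphericalContent m A = 0) :
    μH[m] A = 0 := by
  have hm0 : (0 : ℝ) < m := by positivity
  obtain ⟨ε, -, hε, hε0⟩ := exists_seq_strictAnti_tendsto' (zero_lt_one' ℝ≥0∞)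
  choose s ρ hs hcov hsum using fun l =>
    exists_cover_of_sphericalContent_lt (hA.trans_lt (hε l).1)
  have (l : ℕ) : Countable (s l) := (hs l).to_subtype
  have hdiam : Tendsto (fun l => 2 * ε l ^ (m : ℝ)⁻¹) atTop (𝓝 0) := by
    have hrpow : Tendsto (fun l => ε l ^ (m : ℝ)⁻¹) atTop (𝓝 (0 ^ (m : ℝ)⁻¹)) :=
      hε0.ennrpow_const _
    rw [ENNReal.zero_rpow_of_pos (inv_pos.2 hm0)] at hrpow
    simpa using ENNReal.Tendsto.const_mul hrpow (Or.inr ENNReal.ofNat_ne_top)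
  have hbound : Tendsto (fun l => 2 ^ m * ε l) atTop (𝓝 0) := by
    simpa using ENNReal.Tendsto.const_mul hε0 (Or.inr (by finiteness : (2 : ℝ≥0∞) ^ m ≠ ⊤))
  refine le_antisymm ((Measure.hausdorffMeasure_le_liminf_tsum m A _ hdiam
    (fun l (x : s l) => closedBall (x : X) (ρ l x)) (.of_forall fun l x => ?_)
    (.of_forall hcov)).trans (hbound.liminf_eq ▸ liminf_le_liminf (.of_forall fun l => ?_))) bot_le
  · refine (ediam_closedBall_le_ofReal _ _).trans ?_
    gcongr
    rw [ENNReal.le_rpow_inv_iff hm0, ENNReal.rpow_natCast]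
    exact (ENNReal.le_tsum x).trans (hsum l).le
  · refine le_trans ?_ (mul_le_mul_right (hsum l).le _)
    rw [← ENNReal.tsum_mul_left]
    refine ENNReal.tsum_le_tsum fun x => ?_
    rw [ENNReal.rpow_natCast, ← mul_pow]
    gcongr
    exact ediam_closedBall_le_ofReal _ _

end SphericalContent

section Maximal

variable {X F : Type*} [PseudoMetricSpace X] [MeasurableSpace X] [NormedAddCommGroup F]
  {μ : Measure X} {u v : X → F} {R : ℝ} {x : X}

/-- The Hardy-Littlewood maximal function of `‖u‖`, restricted to balls of radius at most `R`. -/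
noncomputable def localMaximal (μ : Measure X) (u : X → F) (R : ℝ) (x : X) : ℝ≥0∞ :=
  ⨆ r ∈ Ioc 0 R, ⨍⁻ y in ball x r, ‖u y‖ₑ ∂μ

theorem setLIntegral_enorm_ball_le_localMaximal_mul [OpensMeasurableSpace X] {r : ℝ}
    (hr : r ∈ Ioc 0 R) (hμ : μ (ball x r) ≠ ⊤) :
    ∫⁻ y in ball x r, ‖u y‖ₑ ∂μ ≤ localMaximal μ u R x * μ (ball x r) := by
  have : IsFiniteMeasure (μ.restrict (ball x r)) := isFiniteMeasure_restrict.2 hμ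
  rw [mul_comm, ← measure_mul_setLAverage _ hμ]
  gcongr
  exact le_iSup₂_of_le r hr le_rfl

theorem exists_mul_measure_le_setLIntegral_of_lt_localMaximal {a : ℝ≥0∞}
    (h : a < localMaximal μ u R x) :
    ∃ r ∈ Ioc 0 R, a * μ (ball x r) ≤ ∫⁻ y in ball x r, ‖u y‖ₑ ∂μ := by
  simp only [localMaximal, lt_iSup_iff, exists_prop] at h
  obtain ⟨r, hr, hlt⟩ := h
  rw [setLAverage_eq] at hlt
  exact ⟨r, hr, ENNReal.mul_le_of_le_div hlt.le⟩

theorem localMaximal_mono {R' : ℝ} (h : R ≤ R') : localMaximal μ u R x ≤ localMaximal μ u R' x :=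
  biSup_mono fun _ hr => ⟨hr.1, hr.2.trans h⟩

theorem localMaximal_congr [OpensMeasurableSpace X] (h : ∀ᵐ y ∂μ, y ∈ ball x R → u y = v y) :
    localMaximal μ u R x = localMaximal μ v R x := by
  refine iSup_congr fun r => iSup_congr fun hr => laverage_congr ?_
  rw [EventuallyEq, ae_restrict_iff' measurableSet_ball]
  filter_upwards [h] with y hy hyr
  rw [hy (ball_subset_ball hr.2 hyr)]

end Maximal

section BoxingMeasure

variable {m n : ℕ}

/-- On balls centred at points where the maximal function of `u` exceeds `2 * l`, and stopped at
a suitable radius, this measure dominates the perimeter of `{x | t < |u x|}` and the oscillation of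
`u` relative to `l`. -/
noncomputable def boxingMeasure (u : En n → ℝ) (G : En n → En n) (C l : ℝ≥0) (t δ : ℝ) :
    Measure (En n) :=
  C • layerMeasure (volume.withDensity (‖G ·‖ₑ)) (|u ·|) t δ +
    (l : ℝ≥0∞)⁻¹ • volume.withDensity (‖G ·‖ₑ)

theorem pow_le_of_volume_ball_le {x : En (m + 1)} {r : ℝ} (hr : 0 < r) {K L : ℝ≥0∞}
    (h : volume (ball x r) ≤ K * ENNReal.ofReal r * L) :
    ENNReal.ofReal r ^ m ≤ K / volume (ball (0 : En (m + 1)) 1) * L := by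
  rw [Measure.addHaar_ball_of_pos _ _ hr, finrank_euclideanSpace_fin, ENNReal.ofReal_pow hr.le,
    pow_succ', mul_assoc, mul_comm K, mul_assoc,
    ENNReal.mul_le_mul_iff_right (by simpa using hr) ENNReal.ofReal_ne_top] at h
  rw [ENNReal.mul_comm_div, ← mul_div_assoc]
  exact (ENNReal.le_div_iff_mul_le (Or.inl (measure_ball_pos volume _ one_pos).ne')
    (Or.inl measure_ball_lt_top.ne)).2 (h.trans_eq (by ring))

variable {u : En n → ℝ} {G : En n → En n}

theorem exists_liminf_boxingMeasure_univ_le (hum : Measurable u) (hG : Integrable G) (C : ℝ≥0)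
    {l : ℝ≥0} (hl : 0 < l) {δ : ℕ → ℝ} (hδ : Tendsto δ atTop (𝓝[>] 0)) :
    ∃ t ∈ Ioo (l / 2 : ℝ) l, liminf (fun k => boxingMeasure u G C l t (δ k) univ) atTop ≤
      (4 * C + 1) * (∫⁻ z, ‖G z‖ₑ) / l := by
  set κ := (volume : Measure (En n)).withDensity (‖G ·‖ₑ) with hκ
  have hκu : κ univ = ∫⁻ z, ‖G z‖ₑ := by rw [hκ, withDensity_apply _ .univ, setLIntegral_univ]
  have : IsFiniteMeasure κ := ⟨hκu.trans_lt hG.2⟩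
  obtain ⟨t, ht, D, hD, hlim⟩ := exists_tendsto_layerMeasure κ hum.abs
    (half_lt_self (NNReal.coe_pos.2 hl))
  refine ⟨t, ht, ?_⟩
  have hν : Tendsto (fun k => boxingMeasure u G C l t (δ k) univ) atTop
      (𝓝 (C * D + (l : ℝ≥0∞)⁻¹ * κ univ)) :=
    (ENNReal.Tendsto.const_mul (hlim.comp hδ) (Or.inr ENNReal.coe_ne_top)).add_const _
  have hhalf : ENNReal.ofReal (l - l / 2) = l / 2 := by
    rw [sub_half, ENNReal.ofReal_div_of_pos two_pos, ENNReal.ofReal_coe_nnreal,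
      ENNReal.ofReal_ofNat]
  rw [hν.liminf_eq, ← hκu]
  calc C * D + (l : ℝ≥0∞)⁻¹ * κ univ
      ≤ C * (2 * (κ univ / (l / 2))) + (l : ℝ≥0∞)⁻¹ * κ univ := by
        gcongr
        rwa [hhalf] at hD
    _ = (4 * C + 1) * κ univ / l := by
        rw [div_eq_mul_inv, ENNReal.inv_div (by simp) (by simp), div_eq_mul_inv, div_eq_mul_inv]
        ring

end BoxingMeasure

section BoxingInequality

variable {m : ℕ} {Ω : Set (En (m + 1))} {u : En (m + 1) → ℝ} {G : En (m + 1) → En (m + 1)} {R : ℝ}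

/-- Stop at the first radius for which `{y | t < |u y|}` fills at most half of the ball. If this is
`r` itself, then `|u| ≤ l` on half of a ball on which `|u|` has mean at least `2 * l`, and the
Poincaré inequality applies; otherwise both `{y | t < |u y|}` and its complement fill a fixed share
of the ball, and the relative isoperimetric inequality applies. -/
theorem HasWeakGradientOn.exists_radius_pow_le_boxingMeasure (hw : HasWeakGradientOn Ω u G)
    (hΩ : IsOpen Ω) (hum : Measurable u) (hu : Integrable u) (hG : Integrable G) {C : ℝ≥0}
    (hC : LipschitzWith C Real.smoothTransition) {t : ℝ} (ht : 0 < t) {l : ℝ≥0} (htl : t ≤ l)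
    {δ : ℕ → ℝ} (hδ : Tendsto δ atTop (𝓝[>] 0)) {x : En (m + 1)} {r : ℝ}
    (hE : 2 * volume {y | t < |u y|} ≤ volume (ball x (R / 2))) (hx : closedBall x R ⊆ Ω)
    (hr : r ∈ Ioc 0 R) (hmean : 2 * l * volume (ball x r) ≤ ∫⁻ y in ball x r, ‖u y‖ₑ) :
    ∃ ρ ∈ Ioc 0 R, ENNReal.ofReal ρ ^ m ≤ 2 ^ (2 * m + 5) / volume (ball (0 : En (m + 1)) 1) *
      liminf (fun k => boxingMeasure u G C l t (δ k) (ball x ρ)) atTop := by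
  obtain ⟨ρ, ⟨hrρ, hρR⟩, hlow, hhigh⟩ := exists_stopping_radius volume
    (measurableSet_lt measurable_const hum.abs) x hr.1 hr.2 hE
  have hρ : 0 < ρ := hr.1.trans_le hrρ
  have hxρ : closedBall x ρ ⊆ Ω := (closedBall_subset_closedBall hρR).trans hx
  have h2ρ : ENNReal.ofReal (2 * ρ) = 2 * ENNReal.ofReal ρ := by
    rw [ENNReal.ofReal_mul zero_le_two, ENNReal.ofReal_ofNat]
  refine ⟨ρ, ⟨hρ, hρR⟩, pow_le_of_volume_ball_le (x := x) hρ ?_⟩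
  rcases hhigh with rfl | hhigh
  · have hl0 : (l : ℝ≥0∞) ≠ 0 := ENNReal.coe_ne_zero.2 (NNReal.coe_pos.1 (ht.trans_le htl)).ne'
    have hsub : ball x ρ \ {y | t < |u y|} ⊆ ball x ρ ∩ {y | ‖u y‖ₑ ≤ l} := fun y hy =>
      ⟨hy.1, enorm_le_coe.2 (NNReal.coe_le_coe.1 ((not_lt.1 hy.2).trans htl))⟩
    have hosc := hw.mul_volume_ball_le hΩ hum hu hG hxρ hρ ENNReal.coe_ne_top hmean
      (hlow.trans (by gcongr))
    rw [mul_comm, ← ENNReal.le_div_iff_mul_le (.inl hl0) (.inl ENNReal.coe_ne_top)] at hosc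
    calc volume (ball x ρ) ≤ _ := hosc
      _ = 2 ^ (m + 3) * ENNReal.ofReal ρ * ((l : ℝ≥0∞)⁻¹ * ∫⁻ z in ball x ρ, ‖G z‖ₑ) := by
          rw [h2ρ, div_eq_mul_inv]
          ring
      _ ≤ _ := by
          gcongr ?_ ^ ?_ * _ * ?_
          · exact one_le_two
          · omega
          · refine le_liminf_of_le (by isBoundedDefault) (.of_forall fun k => ?_)
            rw [← withDensity_apply _ measurableSet_ball]
            exact le_add_self
  · rw [finrank_euclideanSpace_fin] at hhigh
    refine (hw.volume_ball_le_liminf_layerMeasure hΩ hum hu hG hC ht hδ hxρ hρ hhigh hlow).trans ?_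
    rw [← ENNReal.liminf_const_mul_of_ne_top ENNReal.coe_ne_top, h2ρ,
      show (2 : ℝ≥0∞) ^ (m + 1 + 1) * 2 * (2 * ENNReal.ofReal ρ) * 2 ^ (m + 1) =
        2 ^ (2 * m + 5) * ENNReal.ofReal ρ by ring]
    gcongr
    exact liminf_le_liminf (.of_forall fun k => le_self_add)

theorem HasWeakGradientOn.sphericalContent_localMaximal_le (hw : HasWeakGradientOn Ω u G)
    (hΩ : IsOpen Ω) (hum : Measurable u) (hu : Integrable u) (hG : Integrable G) {C : ℝ≥0}
    (hC : LipschitzWith C Real.smoothTransition) {l : ℝ≥0} (hl : 0 < l)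
    (hlarge : 2 * ((∫⁻ x, ‖u x‖ₑ) / (l / 2)) ≤ volume (ball (0 : En (m + 1)) (R / 2))) :
    sphericalContent m {x | closedBall x R ⊆ Ω ∧ 2 * l < localMaximal volume u R x} ≤
      5 ^ m * (2 ^ (2 * m + 5) / volume (ball (0 : En (m + 1)) 1) *
        ((4 * C + 1) * (∫⁻ z, ‖G z‖ₑ) / l)) := by
  have hδ : Tendsto (fun k : ℕ => 1 / ((k : ℝ) + 1)) atTop (𝓝[>] 0) :=
    tendsto_nhdsWithin_iff.2 ⟨tendsto_one_div_add_atTop_nhds_zero_nat,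
      .of_forall fun k => mem_Ioi.2 (by positivity)⟩
  obtain ⟨t, ht, hlim⟩ := exists_liminf_boxingMeasure_univ_le hum hG C hl hδ
  have ht0 : 0 < t := (half_pos (NNReal.coe_pos.2 hl)).trans ht.1
  have hE : 2 * volume {y | t < |u y|} ≤ volume (ball (0 : En (m + 1)) (R / 2)) := by
    refine le_trans ?_ hlarge
    gcongr
    refine (measure_mono fun y hy => ?_).trans
      (meas_ge_le_lintegral_div hum.enorm.aemeasurable (by simpa using hl.ne') (by finiteness))
    rw [mem_ofPred_eq, ← ENNReal.coe_ofNat, ← ENNReal.coe_div two_ne_zero, coe_le_enorm]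
    exact NNReal.coe_le_coe.1 (by simpa using (ht.1.trans hy).le)
  calc sphericalContent m {x | closedBall x R ⊆ Ω ∧ 2 * l < localMaximal volume u R x}
      ≤ 5 ^ m * (2 ^ (2 * m + 5) / volume (ball (0 : En (m + 1)) 1) *
        liminf (fun k : ℕ => boxingMeasure u G C l t (1 / ((k : ℝ) + 1)) univ) atTop) := by
        refine sphericalContent_le_of_forall_pow_le (R := R)
          (fun k : ℕ => boxingMeasure u G C l t (1 / ((k : ℝ) + 1))) fun x hx => ?_
        obtain ⟨r, hr, hmean⟩ := exists_mul_measure_le_setLIntegral_of_lt_localMaximal hx.2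
        exact hw.exists_radius_pow_le_boxingMeasure hΩ hum hu hG hC ht0 ht.2.le hδ
          (by rwa [Measure.addHaar_ball_center]) hx.1 hr hmean
    _ ≤ _ := by gcongr

end BoxingInequality

section MaximalNull

variable {m : ℕ} {Ω : Set (En (m + 1))} {u : En (m + 1) → ℝ} {G : En (m + 1) → En (m + 1)}

theorem HasWeakGradientOn.sphericalContent_localMaximal_eq_top (hw : HasWeakGradientOn Ω u G)
    (hΩ : IsOpen Ω) (hum : Measurable u) (hu : Integrable u) (hG : Integrable G) {R : ℝ}
    (hR : 0 < R) :
    sphericalContent m {x | closedBall x R ⊆ Ω ∧ localMaximal volume u R x = ⊤} = 0 := by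
  obtain ⟨C, hC⟩ := exists_lipschitzWith_smoothTransition
  have hcast : Tendsto (fun l : ℕ => ((l : ℝ≥0) : ℝ≥0∞)) atTop (𝓝 ⊤) := by
    simpa only [ENNReal.coe_natCast] using ENNReal.tendsto_nat_nhds_top
  have hhalf : Tendsto (fun l : ℕ => ((l : ℝ≥0) : ℝ≥0∞) / 2) atTop (𝓝 ⊤) := by
    simpa only [ENNReal.top_div_of_ne_top ENNReal.ofNat_ne_top] using
      ENNReal.Tendsto.div_const (b := 2) hcast (Or.inl ENNReal.top_ne_zero)
  have hlarge : ∀ᶠ l : ℕ in atTop,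
      2 * ((∫⁻ x, ‖u x‖ₑ) / ((l : ℝ≥0) / 2)) ≤ volume (ball (0 : En (m + 1)) (R / 2)) := by
    have hlim := ENNReal.Tendsto.const_mul
      (ENNReal.Tendsto.const_div (a := ∫⁻ x, ‖u x‖ₑ) hhalf (Or.inr hu.2.ne))
      (Or.inr ENNReal.ofNat_ne_top : (∫⁻ x, ‖u x‖ₑ) / ⊤ ≠ 0 ∨ (2 : ℝ≥0∞) ≠ ⊤)
    simp only [ENNReal.div_top, mul_zero] at hlim
    exact hlim.eventually_le_const (measure_ball_pos volume _ (half_pos hR))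
  have hbound : Tendsto (fun l : ℕ => 5 ^ m * (2 ^ (2 * m + 5) / volume (ball (0 : En (m + 1)) 1) *
      ((4 * C + 1) * (∫⁻ z, ‖G z‖ₑ) / (l : ℝ≥0)))) atTop (𝓝 0) := by
    have hG' : (4 * C + 1) * (∫⁻ z, ‖G z‖ₑ) ≠ ⊤ := by finiteness [hG.2.ne]
    have hvol := (measure_ball_pos volume (0 : En (m + 1)) one_pos).ne'
    simpa only [ENNReal.div_top, mul_zero] using ENNReal.Tendsto.const_mul
      (ENNReal.Tendsto.const_mul (ENNReal.Tendsto.const_div hcast (Or.inr hG'))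
        (Or.inr (ENNReal.div_ne_top (by finiteness) hvol))) (Or.inr (by finiteness))
  refine le_antisymm (ge_of_tendsto hbound ?_) bot_le
  filter_upwards [hlarge, eventually_gt_atTop 0] with l hl hl0
  refine le_trans (sphericalContent_mono ?_)
    (hw.sphericalContent_localMaximal_le hΩ hum hu hG hC (Nat.cast_pos.2 hl0) hl)
  rintro x ⟨hx, htop⟩
  exact ⟨hx, htop ▸ by finiteness⟩

theorem HasWeakGradientOn.hausdorffMeasure_localMaximal_eq_top (hw : HasWeakGradientOn Ω u G)
    (hΩ : IsOpen Ω) (hm : m ≠ 0) (hu : LocallyIntegrableOn u Ω) (hG : LocallyIntegrableOn G Ω) :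
    μH[m] {x ∈ Ω | ∀ R > 0, localMaximal volume u R x = ⊤} = 0 := by
  refine measure_null_of_locally_null _ fun c hc => ?_
  obtain ⟨S, hS, hSΩ⟩ := Metric.nhds_basis_closedBall.mem_iff.1 (hΩ.mem_nhds hc.1)
  set K := closedBall c S
  have hK : MeasurableSet K := measurableSet_closedBall
  have huK : Integrable (K.indicator u) :=
    (hu.integrableOn_compact_subset hSΩ (isCompact_closedBall c S)).integrable_indicator hK
  have hGK : Integrable (K.indicator G) :=
    (hG.integrableOn_compact_subset hSΩ (isCompact_closedBall c S)).integrable_indicator hK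
  set u' := huK.1.mk (K.indicator u)
  have hu' : ∀ᵐ x, x ∈ ball c S → u' x = u x := by
    filter_upwards [huK.1.ae_eq_mk] with x hx hxS
    exact hx.symm.trans (indicator_of_mem (ball_subset_closedBall hxS) u)
  have hw' : HasWeakGradientOn (ball c S) u' (K.indicator G) :=
    hw.congr_of_subset (ball_subset_closedBall.trans hSΩ) hu'
      (.of_forall fun x hx => indicator_of_mem (ball_subset_closedBall hx) G)
  have hnull := hausdorffMeasure_eq_zero_of_sphericalContent_eq_zero hm
    (hw'.sphericalContent_localMaximal_eq_top isOpen_ball huK.1.stronglyMeasurable_mk.measurable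
      (huK.congr huK.1.ae_eq_mk) hGK (half_pos hS))
  refine ⟨_, inter_mem_nhdsWithin _ (ball_mem_nhds c (half_pos hS)),
    measure_mono_null (fun x hx => ?_) hnull⟩
  have hsub : closedBall x (S / 2) ⊆ ball c S := closedBall_subset_ball' (by
    have := mem_ball.1 hx.2
    linarith)
  refine ⟨hsub, ?_⟩
  rw [localMaximal_congr (v := u), hx.1.2 _ (half_pos hS)]
  filter_upwards [hu'] with y hy hyx
  exact hy (hsub (ball_subset_closedBall hyx))

end MaximalNull

section MaximalVector

theorem locallyIntegrableOn_apply {X ι : Type*} [TopologicalSpace X] [MeasurableSpace X] [Fintype ι]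
    {μ : Measure X} {g : X → EuclideanSpace ℝ ι} {s : Set X} (hg : LocallyIntegrableOn g s μ)
    (i : ι) : LocallyIntegrableOn (g · i) s μ :=
  fun x hx => (hg x hx).imp fun _ ht => ⟨ht.1, Integrable.eval_piLp ht.2 i⟩

theorem enorm_le_sum_enorm_apply {ι : Type*} [Fintype ι] (x : EuclideanSpace ℝ ι) :
    ‖x‖ₑ ≤ ∑ i, ‖x i‖ₑ := by
  classical
  calc ‖x‖ₑ = ‖∑ i, x i • EuclideanSpace.single i (1 : ℝ)‖ₑ := by
        conv_lhs => rw [← (EuclideanSpace.basisFun ι ℝ).sum_repr x]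
        simp
    _ ≤ ∑ i, ‖x i • EuclideanSpace.single i (1 : ℝ)‖ₑ := enorm_sum_le _ _
    _ = ∑ i, ‖x i‖ₑ := by simp [← ofReal_norm, norm_smul]

theorem localMaximal_le_sum {X ι : Type*} [PseudoMetricSpace X] [MeasurableSpace X] [Fintype ι]
    {μ : Measure X} {g : X → EuclideanSpace ℝ ι} (hg : AEStronglyMeasurable g μ) (R : ℝ) (x : X) :
    localMaximal μ g R x ≤ ∑ i, localMaximal μ (g · i) R x := by
  refine iSup₂_le fun r hr => ?_
  have hgi (i : ι) : AEMeasurable (fun y => ‖g y i‖ₑ) μ :=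
    ((EuclideanSpace.proj (𝕜 := ℝ) i).continuous.comp_aestronglyMeasurable hg).enorm
  calc ⨍⁻ y in ball x r, ‖g y‖ₑ ∂μ ≤ ⨍⁻ y in ball x r, ∑ i, ‖g y i‖ₑ ∂μ :=
        lintegral_mono fun y => enorm_le_sum_enorm_apply _
    _ = ∑ i, ⨍⁻ y in ball x r, ‖g y i‖ₑ ∂μ :=
        lintegral_finsetSum' _ fun i _ => (hgi i).restrict.smul_measure _
    _ ≤ ∑ i, localMaximal μ (g · i) R x := by
        gcongr with i
        exact le_iSup₂_of_le r hr le_rfl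

theorem hausdorffMeasure_localMaximal_eq_top_of_forall_hasWeakGradientOn {m : ℕ}
    {Ω : Set (En (m + 1))} (hΩ : IsOpen Ω) (hm : m ≠ 0) {g : En (m + 1) → En (m + 1)}
    {H : En (m + 1) → Fin (m + 1) → En (m + 1)} (hgm : AEStronglyMeasurable g)
    (hg : LocallyIntegrableOn g Ω) (hH : ∀ i, LocallyIntegrableOn (H · i) Ω)
    (hw : ∀ i, HasWeakGradientOn Ω (g · i) (H · i)) :
    μH[m] {x ∈ Ω | ∀ R > 0, localMaximal volume g R x = ⊤} = 0 := by
  refine measure_mono_null (fun x hx => ?_) (measure_iUnion_null fun i =>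
    (hw i).hausdorffMeasure_localMaximal_eq_top hΩ hm
      (locallyIntegrableOn_apply hg i) (hH i))
  by_contra hcon
  simp only [mem_iUnion, mem_ofPred_eq, hx.1, true_and, not_exists, not_forall] at hcon
  have hfin : ∀ i, ∀ᶠ R in 𝓝[>] (0 : ℝ), localMaximal volume (g · i) R x < ⊤ := fun i => by
    obtain ⟨S, hS, hne⟩ := hcon i
    filter_upwards [Ioo_mem_nhdsGT hS] with R hR
    exact (localMaximal_mono hR.2.le).trans_lt (lt_top_iff_ne_top.2 hne)
  obtain ⟨R, hR, hR0⟩ := ((eventually_all.2 hfin).and self_mem_nhdsWithin).exists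
  exact ((localMaximal_le_sum hgm R x).trans_lt (ENNReal.sum_lt_top.2 fun i _ => hR i)).ne
    (hx.2 R hR0)

end MaximalVector

section WeakPartialIntegrable

variable {n : ℕ} {Ω : Set (En n)} {u w : En n → ℝ} {v : En n} {η η₀ : En n → ℝ}

theorem IsTest.add (hη : IsTest Ω η) (hη₀ : IsTest Ω η₀) : IsTest Ω (η + η₀) :=
  ⟨hη.1.add hη₀.1, hη.2.1.add hη₀.2.1, (tsupport_add η η₀).trans (union_subset hη.2.2 hη₀.2.2)⟩

theorem IsTest.integrable_mul_fderiv (hη : IsTest Ω η) (hu : LocallyIntegrableOn u Ω) (v : En n) :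
    Integrable fun x => u x * fderiv ℝ η x v := by
  have hcont : Continuous fun x => fderiv ℝ η x v :=
    (hη.1.continuous_fderiv (by simp)).clm_apply continuous_const
  refine (integrableOn_iff_integrable_of_support_subset fun x hx => ?_).1
    ((hu.integrableOn_compact_subset hη.2.2 hη.2.1).mul_continuousOn hcont.continuousOn hη.2.1)
  exact tsupport_fderiv_apply_subset ℝ v (subset_tsupport _ (right_ne_zero_of_mul hx))

theorem locallyIntegrableOn_of_forall_isTest_aestronglyMeasurable_mul (hΩ : IsOpen Ω)
    {H : En n → ℝ} (hH : LocallyIntegrableOn H Ω) (hwH : ∀ x, ‖w x‖ ≤ H x)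
    (hw : ∀ η, IsTest Ω η → AEStronglyMeasurable (fun x => w x * η x)) :
    LocallyIntegrableOn w Ω := by
  intro x hx
  obtain ⟨η, hηΩ, hηc, hη, -, hηx⟩ := exists_contDiff_tsupport_subset (n := ⊤) (hΩ.mem_nhds hx)
  have hopen : IsOpen {y | η y ≠ 0} := isOpen_ne_fun hη.continuous continuous_const
  obtain ⟨s, hs, hHs⟩ := hH x hx
  refine ⟨s ∩ {y | η y ≠ 0}, inter_mem hs (mem_nhdsWithin_of_mem_nhds
    (hopen.mem_nhds (by simp [hηx]))), ?_⟩
  refine Integrable.mono' (hHs.mono_set inter_subset_left) ?_ (.of_forall hwH)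
  refine (AEStronglyMeasurable.mono_measure ?_ (Measure.restrict_mono inter_subset_right le_rfl))
  refine ((hw η ⟨hη, hηc, hηΩ⟩).restrict.mul
    hη.continuous.measurable.inv.aestronglyMeasurable).congr ?_
  filter_upwards [ae_restrict_mem hopen.measurableSet] with y hy
  exact mul_inv_cancel_right₀ hy _

theorem HasWeakPartialOn.zero_of_not_aestronglyMeasurable (hw : HasWeakPartialOn Ω u w v)
    (hu : LocallyIntegrableOn u Ω) (hη₀ : IsTest Ω η₀)
    (hnm : ¬AEStronglyMeasurable (fun x => w x * η₀ x)) : HasWeakPartialOn Ω u 0 v := by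
  -- Where `w * η` is not measurable, its Bochner integral has the junk value `0`.
  have hjunk : ∀ η, IsTest Ω η → ¬AEStronglyMeasurable (fun x => w x * η x) →
      ∫ x, u x * fderiv ℝ η x v = 0 := fun η hη h => by
    rw [hw η hη, integral_undef fun hint => h hint.1, neg_zero]
  intro η hη
  simp only [Pi.zero_apply, zero_mul, integral_zero, neg_zero]
  by_cases hm : AEStronglyMeasurable (fun x => w x * η x)
  · have hsum : ¬AEStronglyMeasurable (fun x => w x * (η + η₀) x) := fun h =>
      hnm ((h.sub hm).congr (.of_forall fun x => by simp [mul_add]))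
    have hlin : ∀ x, u x * fderiv ℝ (η + η₀) x v =
        u x * fderiv ℝ η x v + u x * fderiv ℝ η₀ x v := fun x => by
      rw [fderiv_add (hη.1.differentiable (by simp) x) (hη₀.1.differentiable (by simp) x),
        add_apply, mul_add]
    have hzero := hjunk _ (hη.add hη₀) hsum
    simp_rw [hlin] at hzero
    rwa [integral_add (hη.integrable_mul_fderiv hu v) (hη₀.integrable_mul_fderiv hu v),
      hjunk _ hη₀ hnm, add_zero] at hzero
  · exact hjunk η hη hm

theorem HasWeakPartialOn.exists_locallyIntegrableOn (hw : HasWeakPartialOn Ω u w v) (hΩ : IsOpen Ω)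
    (hu : LocallyIntegrableOn u Ω) {H : En n → ℝ} (hH : LocallyIntegrableOn H Ω)
    (hwH : ∀ x, ‖w x‖ ≤ H x) : ∃ w', HasWeakPartialOn Ω u w' v ∧ LocallyIntegrableOn w' Ω := by
  by_cases hm : ∀ η, IsTest Ω η → AEStronglyMeasurable (fun x => w x * η x)
  · exact ⟨w, hw, locallyIntegrableOn_of_forall_isTest_aestronglyMeasurable_mul hΩ hH hwH hm⟩
  · push Not at hm
    obtain ⟨η₀, hη₀, hnm⟩ := hm
    exact ⟨0, hw.zero_of_not_aestronglyMeasurable hu hη₀ hnm, locallyIntegrableOn_zero⟩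

theorem HasWeakGradientOn.exists_locallyIntegrableOn {G : En n → En n}
    (hw : HasWeakGradientOn Ω u G) (hΩ : IsOpen Ω) (hu : LocallyIntegrableOn u Ω)
    (hG : LocallyIntegrableOn (‖G ·‖) Ω) :
    ∃ G', HasWeakGradientOn Ω u G' ∧ LocallyIntegrableOn G' Ω := by
  choose G' hw' hG' using fun i => (hw i).exists_locallyIntegrableOn hΩ hu hG
    fun x => PiLp.norm_apply_le (G x) i
  refine ⟨fun x => WithLp.toLp 2 fun i => G' i x, hw', ?_⟩
  refine (locallyIntegrableOn_iff hΩ.isLocallyClosed).2 fun K hK hKc => Integrable.of_eval_piLp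
    fun i => (hG' i).integrableOn_compact_subset hK hKc

end WeakPartialIntegrable

section Sobolev

variable {n : ℕ} {Ω : Set (En n)} {f : En n → ℝ} {g : En n → En n} {h : En n → Fin n → En n}

theorem MemW2pLoc.locallyIntegrableOn (hf : MemW2pLoc 1 Ω f g h) (hΩ : IsOpen Ω) :
    LocallyIntegrableOn f Ω ∧ LocallyIntegrableOn g Ω ∧
      ∀ i, LocallyIntegrableOn (fun x => ‖h x i‖) Ω := by
  obtain ⟨hfm, hgm, -, -, hint⟩ := hf
  simp only [Real.rpow_one, ← Real.norm_eq_abs] at hint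
  simp only [locallyIntegrableOn_iff hΩ.isLocallyClosed]
  exact ⟨fun K hK hKc => (integrable_norm_iff hfm.restrict).1 (hint K hK hKc).1,
    fun K hK hKc => (integrable_norm_iff hgm.restrict).1 (hint K hK hKc).2.1,
    fun i K hK hKc => (hint K hK hKc).2.2 i⟩

theorem MemW2pLoc.hausdorffMeasure_localMaximal_eq_top {m : ℕ} (hm : m ≠ 0)
    {Ω : Set (En (m + 1))} (hΩ : IsOpen Ω) {f : En (m + 1) → ℝ} {g : En (m + 1) → En (m + 1)}
    {h : En (m + 1) → Fin (m + 1) → En (m + 1)} (hf : MemW2pLoc 1 Ω f g h) :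
    μH[m] {x ∈ Ω | ∀ R > 0, localMaximal volume g R x = ⊤} = 0 := by
  obtain ⟨-, hg, hh⟩ := hf.locallyIntegrableOn hΩ
  choose H hw hH using fun i => (hf.2.2.2.1 i).exists_locallyIntegrableOn hΩ
    (locallyIntegrableOn_apply hg i) (hh i)
  exact hausdorffMeasure_localMaximal_eq_top_of_forall_hasWeakGradientOn (H := fun x i => H i x)
    hΩ hm hf.2.1 hg hH hw

end Sobolev

section AverageComparison

theorem measure_mul_measure_mul_enorm_setAverage_sub_le {X F : Type*} [MeasurableSpace X]
    [NormedAddCommGroup F] [NormedSpace ℝ F] [CompleteSpace F] {μ : Measure X} {f : X → F}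
    {s t : Set X} (hfs : IntegrableOn f s μ) (hft : IntegrableOn f t μ) (hs : μ s ≠ ⊤)
    (ht : μ t ≠ ⊤) :
    μ s * μ t * ‖(⨍ y in s, f y ∂μ) - ⨍ y in t, f y ∂μ‖ₑ ≤
      ∫⁻ x in s, ∫⁻ y in t, ‖f x - f y‖ₑ ∂μ ∂μ := by
  have : IsFiniteMeasure (μ.restrict s) := isFiniteMeasure_restrict.2 hs
  have : IsFiniteMeasure (μ.restrict t) := isFiniteMeasure_restrict.2 ht
  have hinner : ∀ x, ∫ y in t, (f x - f y) ∂μ = μ.real t • f x - ∫ y in t, f y ∂μ := fun x => by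
    rw [integral_sub (integrable_const _) hft, setIntegral_const]
  have hdouble : (μ.real s * μ.real t) • ((⨍ y in s, f y ∂μ) - ⨍ y in t, f y ∂μ) =
      ∫ x in s, ∫ y in t, (f x - f y) ∂μ ∂μ := by
    simp_rw [hinner]
    rw [integral_sub (hfs.fun_smul _) (integrable_const _), integral_smul, setIntegral_const,
      smul_sub, mul_smul, smul_comm, measure_smul_setAverage f hs, mul_smul,
      measure_smul_setAverage f ht]
  calc μ s * μ t * ‖(⨍ y in s, f y ∂μ) - ⨍ y in t, f y ∂μ‖ₑ
      = ‖∫ x in s, ∫ y in t, (f x - f y) ∂μ ∂μ‖ₑ := by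
        rw [← hdouble, enorm_smul, enorm_mul, Real.enorm_of_nonneg measureReal_nonneg,
          Real.enorm_of_nonneg measureReal_nonneg, ofReal_measureReal hs, ofReal_measureReal ht]
    _ ≤ ∫⁻ x in s, ‖∫ y in t, (f x - f y) ∂μ‖ₑ ∂μ := enorm_integral_le_lintegral_enorm _
    _ ≤ _ := lintegral_mono fun x => enorm_integral_le_lintegral_enorm _

variable {n : ℕ} {Ω : Set (En n)} {f : En n → ℝ} {g : En n → En n} {x y : En n} {ρ ρ' δ : ℝ}
  {K : ℝ≥0}

theorem HasWeakGradientOn.lintegral_ball_lintegral_ball_enorm_sub_le_of_locallyIntegrableOn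
    (hw : HasWeakGradientOn Ω f g) (hΩ : IsOpen Ω) (hf : LocallyIntegrableOn f Ω)
    (hg : LocallyIntegrableOn g Ω) (hx : closedBall x ρ ⊆ Ω) :
    ∫⁻ y in ball x ρ, ∫⁻ z in ball x ρ, ‖f y - f z‖ₑ ≤
      ENNReal.ofReal (2 * ρ) * (2 ^ n * volume (ball x ρ) * ∫⁻ z in ball x ρ, ‖g z‖ₑ) := by
  obtain ⟨L, hL, hxL, hLΩ⟩ := exists_compact_between (isCompact_closedBall x ρ) hΩ hx
  have hindicator {F : Type} [Zero F] (φ : En n → F) : EqOn (L.indicator φ) φ (ball x ρ) :=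
    fun y hy => indicator_of_mem (interior_subset (hxL (ball_subset_closedBall hy))) φ
  have hw' : HasWeakGradientOn (interior L) (L.indicator f) (L.indicator g) :=
    hw.congr_of_subset (interior_subset.trans hLΩ)
      (.of_forall fun y hy => indicator_of_mem (interior_subset hy) f)
      (.of_forall fun y hy => indicator_of_mem (interior_subset hy) g)
  have hpoincare := hw'.lintegral_ball_lintegral_ball_enorm_sub_le_lintegral isOpen_interior
    ((hf.integrableOn_compact_subset hLΩ hL).integrable_indicator hL.measurableSet)
    ((hg.integrableOn_compact_subset hLΩ hL).integrable_indicator hL.measurableSet) hxL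
  calc ∫⁻ y in ball x ρ, ∫⁻ z in ball x ρ, ‖f y - f z‖ₑ
      = ∫⁻ y in ball x ρ, ∫⁻ z in ball x ρ, ‖L.indicator f y - L.indicator f z‖ₑ :=
        setLIntegral_congr_fun measurableSet_ball fun y hy =>
          setLIntegral_congr_fun measurableSet_ball fun z hz => by
            simp only [hindicator f hy, hindicator f hz]
    _ ≤ _ := hpoincare
    _ = _ := by
        rw [setLIntegral_congr_fun measurableSet_ball fun z hz => congrArg enorm (hindicator g hz)]

theorem HasWeakGradientOn.dist_ballAvg_ballAvg_le (hw : HasWeakGradientOn Ω f g)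
    (hΩ : IsOpen Ω) (hf : LocallyIntegrableOn f Ω) (hg : LocallyIntegrableOn g Ω)
    (hK : localMaximal volume g δ x ≤ K) (hx : closedBall x ρ ⊆ Ω) (hρ : ρ ∈ Ioc 0 δ)
    (hρ' : ρ / 2 ≤ ρ') (hsub : ball y ρ' ⊆ ball x ρ) :
    dist (ballAvg f y ρ') (ballAvg f x ρ) ≤ 2 ^ (2 * n + 1) * K * ρ := by
  have hfx : IntegrableOn f (ball x ρ) := (hf.integrableOn_compact_subset hx
    (isCompact_closedBall x ρ)).mono_set ball_subset_closedBall
  have hdoubling : volume (ball x ρ) ≤ 2 ^ n * volume (ball y ρ') := by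
    have hball := addHaar_ball_two_mul volume y ρ'
    rw [finrank_euclideanSpace_fin] at hball
    rw [← hball, Measure.addHaar_ball_center, ← Measure.addHaar_ball_center volume y]
    exact measure_mono (ball_subset_ball (by linarith))
  have hV0 : volume (ball x ρ) ≠ 0 := (measure_ball_pos volume x hρ.1).ne'
  have hV : volume (ball x ρ) ≠ ⊤ := measure_ball_lt_top.ne
  have hmain : volume (ball x ρ) * (volume (ball x ρ) * ‖ballAvg f y ρ' - ballAvg f x ρ‖ₑ) ≤
      volume (ball x ρ) * (volume (ball x ρ) * (2 ^ (2 * n + 1) * K * ENNReal.ofReal ρ)) := by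
    calc volume (ball x ρ) * (volume (ball x ρ) * ‖ballAvg f y ρ' - ballAvg f x ρ‖ₑ)
        ≤ 2 ^ n * volume (ball y ρ') *
            (volume (ball x ρ) * ‖ballAvg f y ρ' - ballAvg f x ρ‖ₑ) := by gcongr
      _ = 2 ^ n * (volume (ball y ρ') * volume (ball x ρ) *
            ‖ballAvg f y ρ' - ballAvg f x ρ‖ₑ) := by ring
      _ ≤ 2 ^ n * ∫⁻ z in ball x ρ, ∫⁻ w in ball x ρ, ‖f z - f w‖ₑ :=
          mul_le_mul_right ((measure_mul_measure_mul_enorm_setAverage_sub_le (hfx.mono_set hsub) hfx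
            measure_ball_lt_top.ne hV).trans (lintegral_mono_set hsub)) _
      _ ≤ 2 ^ n * (ENNReal.ofReal (2 * ρ) *
            (2 ^ n * volume (ball x ρ) * ∫⁻ z in ball x ρ, ‖g z‖ₑ)) := mul_le_mul_right
          (hw.lintegral_ball_lintegral_ball_enorm_sub_le_of_locallyIntegrableOn hΩ hf hg hx) _
      _ ≤ 2 ^ n * (ENNReal.ofReal (2 * ρ) *
            (2 ^ n * volume (ball x ρ) * (K * volume (ball x ρ)))) := by
          gcongr
          exact (setLIntegral_enorm_ball_le_localMaximal_mul hρ hV).trans (by gcongr)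
      _ = _ := by
          rw [ENNReal.ofReal_mul zero_le_two, ENNReal.ofReal_ofNat]
          ring
  rw [ENNReal.mul_le_mul_iff_right hV0 hV, ENNReal.mul_le_mul_iff_right hV0 hV] at hmain
  simpa [Real.dist_eq, hρ.1.le] using ENNReal.toReal_mono (by finiteness) hmain

end AverageComparison

section DyadicTelescoping

variable {F : Type*} [PseudoMetricSpace F] {a : ℝ → F} {C δ : ℝ}

theorem dist_le_of_forall_dist_le_dyadic
    (h : ∀ ρ ∈ Ioc 0 δ, ∀ ρ' ∈ Icc (ρ / 2) ρ, dist (a ρ') (a ρ) ≤ C * ρ) :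
    ∀ ρ ∈ Ioc 0 δ, ∀ ρ' ∈ Ioc 0 ρ, dist (a ρ') (a ρ) ≤ 2 * C * ρ := by
  suffices hpow : ∀ j : ℕ, ∀ ρ ∈ Ioc 0 δ, ∀ ρ' ∈ Ioc 0 ρ, ρ ≤ 2 ^ j * ρ' →
      dist (a ρ') (a ρ) ≤ 2 * C * ρ by
    intro ρ hρ ρ' hρ'
    obtain ⟨j, hj⟩ := pow_unbounded_of_one_lt (ρ / ρ') one_lt_two
    exact hpow j ρ hρ ρ' hρ' ((div_lt_iff₀ hρ'.1).1 hj).le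
  have hnonneg : ∀ ρ ∈ Ioc 0 δ, 0 ≤ C * ρ := fun ρ hρ =>
    dist_nonneg.trans (h ρ hρ ρ ⟨half_le_self hρ.1.le, le_rfl⟩)
  intro j
  induction j with
  | zero =>
    intro ρ hρ ρ' hρ' hle
    rw [le_antisymm hρ'.2 (by simpa using hle), dist_self]
    linarith [hnonneg ρ hρ]
  | succ j ih =>
    intro ρ hρ ρ' hρ' hle
    rcases le_total (ρ / 2) ρ' with hhalf | hhalf
    · linarith [h ρ hρ ρ' ⟨hhalf, hρ'.2⟩, hnonneg ρ hρ]
    · have hstep := h ρ hρ (ρ / 2) ⟨le_rfl, half_le_self hρ.1.le⟩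
      have hrest := ih (ρ / 2) ⟨half_pos hρ.1, (half_le_self hρ.1.le).trans hρ.2⟩ ρ'
        ⟨hρ'.1, hhalf⟩ (by rw [pow_succ] at hle; linarith)
      linarith [dist_triangle (a ρ') (a (ρ / 2)) (a ρ)]

theorem exists_tendsto_of_forall_dist_le_mul [CompleteSpace F] (hδ : 0 < δ)
    (h : ∀ ρ ∈ Ioc 0 δ, ∀ ρ' ∈ Ioc 0 ρ, dist (a ρ') (a ρ) ≤ C * ρ) :
    ∃ L, Tendsto a (𝓝[>] 0) (𝓝 L) := by
  refine cauchy_map_iff_exists_tendsto.1 (Metric.cauchy_iff.2 ⟨inferInstance, fun ε hε => ?_⟩)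
  have hlim : Tendsto (fun ρ => C * ρ) (𝓝[>] 0) (𝓝 0) :=
    ((continuous_const_mul C).tendsto' 0 0 (mul_zero C)).mono_left nhdsWithin_le_nhds
  obtain ⟨ρ, hρε, hρ⟩ :=
    ((hlim.eventually_lt_const (half_pos hε)).and (Ioc_mem_nhdsGT hδ)).exists
  refine ⟨a '' Ioc 0 ρ, image_mem_map (Ioc_mem_nhdsGT hρ.1), ?_⟩
  rintro _ ⟨r, hr, rfl⟩ _ ⟨s, hs, rfl⟩
  linarith [dist_triangle_right (a r) (a s) (a ρ), h ρ hρ r hr, h ρ hρ s hs]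

end DyadicTelescoping

section PreciseRepresentative

variable {n : ℕ} {Ω : Set (En n)} {f : En n → ℝ} {g : En n → En n} {x y : En n} {ρ δ : ℝ}
  {K : ℝ≥0}

theorem tendsto_ballAvg_preciseRep (h : ∃ L, Tendsto (ballAvg f x) (𝓝[>] 0) (𝓝 L)) :
    Tendsto (ballAvg f x) (𝓝[>] 0) (𝓝 (preciseRep f x)) := by
  rw [preciseRep, dif_pos h]
  exact h.choose_spec

theorem HasWeakGradientOn.dist_preciseRep_ballAvg_le (hw : HasWeakGradientOn Ω f g)
    (hΩ : IsOpen Ω) (hf : LocallyIntegrableOn f Ω) (hg : LocallyIntegrableOn g Ω)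
    (hK : localMaximal volume g δ x ≤ K) (hx : closedBall x δ ⊆ Ω) (hρ : ρ ∈ Ioc 0 δ) :
    dist (preciseRep f x) (ballAvg f x ρ) ≤ 2 * (2 ^ (2 * n + 1) * K) * ρ := by
  have hosc := dist_le_of_forall_dist_le_dyadic (a := ballAvg f x) (δ := δ) fun r hr r' hr' =>
    hw.dist_ballAvg_ballAvg_le hΩ hf hg hK ((closedBall_subset_closedBall hr.2).trans hx) hr
      hr'.1 (ball_subset_ball hr'.2)
  have hlim := tendsto_ballAvg_preciseRep
    (exists_tendsto_of_forall_dist_le_mul (hρ.1.trans_le hρ.2) hosc)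
  refine le_of_tendsto (hlim.dist tendsto_const_nhds) ?_
  filter_upwards [Ioc_mem_nhdsGT hρ.1] with r hr
  exact hosc ρ hρ r hr

theorem HasWeakGradientOn.dist_preciseRep_le (hw : HasWeakGradientOn Ω f g) (hΩ : IsOpen Ω)
    (hf : LocallyIntegrableOn f Ω) (hg : LocallyIntegrableOn g Ω)
    (hKx : localMaximal volume g δ x ≤ K) (hKy : localMaximal volume g δ y ≤ K)
    (hx : closedBall x δ ⊆ Ω) (hy : closedBall y δ ⊆ Ω) (hxy : 2 * dist x y ≤ δ) :
    dist (preciseRep f x) (preciseRep f y) ≤ 2 ^ (2 * n + 4) * K * dist x y := by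
  rcases eq_or_ne x y with rfl | hne
  · simp
  have hd : 0 < dist x y := dist_pos.2 hne
  have hsub : ball y (dist x y) ⊆ ball x (2 * dist x y) :=
    ball_subset_ball' (by rw [dist_comm y x]; linarith)
  have hd2 : 2 * dist x y ∈ Ioc 0 δ := ⟨by linarith, hxy⟩
  have hnear := hw.dist_ballAvg_ballAvg_le hΩ hf hg hKx
    ((closedBall_subset_closedBall hxy).trans hx) hd2 (by linarith) hsub
  calc dist (preciseRep f x) (preciseRep f y)
      ≤ dist (preciseRep f x) (ballAvg f x (2 * dist x y)) +
          dist (ballAvg f x (2 * dist x y)) (ballAvg f y (dist x y)) +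
          dist (ballAvg f y (dist x y)) (preciseRep f y) := dist_triangle4 ..
    _ ≤ 2 * (2 ^ (2 * n + 1) * K) * (2 * dist x y) + 2 ^ (2 * n + 1) * K * (2 * dist x y) +
          2 * (2 ^ (2 * n + 1) * K) * dist x y := by
        rw [dist_comm (ballAvg f x _), dist_comm (ballAvg f y _) (preciseRep f y)]
        gcongr
        · exact hw.dist_preciseRep_ballAvg_le hΩ hf hg hKx hx hd2
        · exact hw.dist_preciseRep_ballAvg_le hΩ hf hg hKy hy ⟨hd, by linarith⟩
    _ = 2 ^ (2 * n + 4) * K * dist x y := by ring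

end PreciseRepresentative

section GoodSet

variable {n : ℕ} {Ω : Set (En n)} {f : En n → ℝ} {g : En n → En n}

theorem isClosed_setOf_ball_subset {X : Type*} [PseudoMetricSpace X] (Ω : Set X) (r : ℝ) :
    IsClosed {x | ball x r ⊆ Ω} := by
  have hcompl : {x | ball x r ⊆ Ω} = (thickening r Ωᶜ)ᶜ := by
    ext x
    simp only [mem_ofPred_eq, mem_compl_iff, mem_thickening_iff, not_exists, not_and, not_lt,
      subset_def, mem_ball]
    exact forall_congr' fun y => by
      rw [dist_comm x y, ← not_imp_not, not_lt]
  rw [hcompl]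
  exact isOpen_thickening.isClosed_compl

theorem lowerSemicontinuous_measure_ball {X : Type*} [PseudoMetricSpace X] [MeasurableSpace X]
    (μ : Measure X) (r : ℝ) : LowerSemicontinuous fun x => μ (ball x r) := by
  rintro x a (ha : a < μ (ball x r))
  have hunion : ⋃ k : ℕ, ball x (r - 1 / ((k : ℝ) + 1)) = ball x r := by
    refine (iUnion_subset fun k => ball_subset_ball (sub_le_self r (by positivity))).antisymm
      fun y hy => ?_
    obtain ⟨k, hk⟩ := exists_nat_one_div_lt (sub_pos.2 (mem_ball.1 hy))
    exact mem_iUnion.2 ⟨k, mem_ball.2 (by linarith)⟩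
  have hmono : Monotone fun k : ℕ => ball x (r - 1 / ((k : ℝ) + 1)) := fun k l hkl =>
    ball_subset_ball (sub_le_sub_left (Nat.one_div_le_one_div hkl) r)
  rw [← hunion, hmono.measure_iUnion, lt_iSup_iff] at ha
  obtain ⟨k, hk⟩ := ha
  filter_upwards [ball_mem_nhds x (Nat.one_div_pos_of_nat (n := k))] with y hy
  rw [mem_ball'] at hy
  exact hk.trans_le (measure_mono (ball_subset_ball' (by linarith)))

theorem lowerSemicontinuous_localMaximal (g : En n → En n) (R : ℝ) :
    LowerSemicontinuous (localMaximal volume g R) := by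
  refine lowerSemicontinuous_biSup fun r hr => ?_
  have hball : ∀ x : En n, ⨍⁻ y in ball x r, ‖g y‖ₑ ∂volume =
      (volume (ball (0 : En n) r))⁻¹ * (volume.withDensity (‖g ·‖ₑ)) (ball x r) := fun x => by
    rw [setLAverage_eq, withDensity_apply _ measurableSet_ball, Measure.addHaar_ball_center,
      ENNReal.div_eq_inv_mul]
  simp_rw [hball]
  exact (ENNReal.continuous_const_mul
    (ENNReal.inv_ne_top.2 (measure_ball_pos volume 0 hr.1).ne')).comp_lowerSemicontinuous
    (lowerSemicontinuous_measure_ball _ r) (monotone_id.const_mul' _)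

/-- The points `x` of `Ω` with `‖x‖ ≤ k` that lie at distance at least `2 / (k + 1)` from the
complement of `Ω` and at which the maximal function of `g` at scale `1 / (k + 1)` is at most
`k + 1`. -/
def goodSet (Ω : Set (En n)) (g : En n → En n) (k : ℕ) : Set (En n) :=
  {x | x ∈ closedBall 0 k ∧ ball x (2 / ((k : ℝ) + 1)) ⊆ Ω ∧
    localMaximal volume g (1 / ((k : ℝ) + 1)) x ≤ k + 1}

theorem isCompact_goodSet (Ω : Set (En n)) (g : En n → En n) (k : ℕ) :
    IsCompact (goodSet Ω g k) :=
  (isCompact_closedBall 0 _).inter_right ((isClosed_setOf_ball_subset Ω _).inter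
    ((lowerSemicontinuous_localMaximal g _).isClosed_preimage _))

theorem goodSet_mono (Ω : Set (En n)) (g : En n → En n) : Monotone (goodSet Ω g) := by
  rintro k l hkl x ⟨hx, hΩ, hmax⟩
  refine ⟨closedBall_subset_closedBall (Nat.cast_le.2 hkl) hx,
    (ball_subset_ball (by gcongr)).trans hΩ, ?_⟩
  calc localMaximal volume g (1 / ((l : ℝ) + 1)) x
      ≤ localMaximal volume g (1 / ((k : ℝ) + 1)) x :=
        localMaximal_mono (Nat.one_div_le_one_div hkl)
    _ ≤ k + 1 := hmax
    _ ≤ l + 1 := by gcongr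

theorem exists_mem_goodSet (hΩ : IsOpen Ω) {x : En n} (hx : x ∈ Ω) {R : ℝ} (hR : 0 < R)
    (hmax : localMaximal volume g R x ≠ ⊤) : ∃ k, x ∈ goodSet Ω g k := by
  obtain ⟨ε, hε, hball⟩ := Metric.isOpen_iff.1 hΩ x hx
  have hscale : Tendsto (fun k : ℕ => 1 / ((k : ℝ) + 1)) atTop (𝓝 0) :=
    tendsto_one_div_add_atTop_nhds_zero_nat
  obtain ⟨k, hkx, hkε, hkR, hkmax⟩ := (tendsto_natCast_atTop_atTop.eventually_ge_atTop ‖x‖ |>.and <|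
    (hscale.eventually_lt_const (half_pos hε)).and <| (hscale.eventually_lt_const hR).and <|
    ENNReal.tendsto_nat_nhds_top.eventually_const_lt (lt_top_iff_ne_top.2 hmax)).exists
  refine ⟨k, mem_closedBall_zero_iff.2 hkx, (ball_subset_ball ?_).trans hball,
    (localMaximal_mono hkR.le).trans (hkmax.le.trans le_self_add)⟩
  calc 2 / ((k : ℝ) + 1) = 2 * (1 / ((k : ℝ) + 1)) := by ring
    _ ≤ ε := by linarith

theorem MemW2pLoc.hausdorffMeasure_diff_iUnion_goodSet {m : ℕ} (hm : m ≠ 0)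
    {Ω : Set (En (m + 1))} (hΩ : IsOpen Ω) {f : En (m + 1) → ℝ} {g : En (m + 1) → En (m + 1)}
    {h : En (m + 1) → Fin (m + 1) → En (m + 1)} (hf : MemW2pLoc 1 Ω f g h) :
    μH[m] (Ω \ ⋃ k, goodSet Ω g k) = 0 := by
  refine measure_mono_null ?_ (hf.hausdorffMeasure_localMaximal_eq_top hm hΩ)
  refine fun x hx => ⟨hx.1, fun R hR => ?_⟩
  by_contra hmax
  exact hx.2 (mem_iUnion.2 (exists_mem_goodSet hΩ hx.1 hR hmax))

theorem HasWeakGradientOn.exists_lipschitzOnWith_goodSet (hw : HasWeakGradientOn Ω f g)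
    (hΩ : IsOpen Ω) (hf : LocallyIntegrableOn f Ω) (hg : LocallyIntegrableOn g Ω) (k : ℕ) :
    ∃ K, LipschitzOnWith K (preciseRep f) (goodSet Ω g k) := by
  refine LocallyLipschitzOn.exists_lipschitzOnWith_of_compact (isCompact_goodSet Ω g k)
    fun x _ => ?_
  set δ := 1 / ((k : ℝ) + 1) with hδ
  have hδ0 : 0 < δ := by positivity
  have hsub : ∀ y ∈ goodSet Ω g k, closedBall y δ ⊆ Ω := fun y hy =>
    (closedBall_subset_ball (by rw [hδ]; gcongr; norm_num)).trans hy.2.1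
  refine ⟨2 ^ (2 * n + 4) * (k + 1), goodSet Ω g k ∩ ball x (δ / 4),
    inter_mem_nhdsWithin _ (ball_mem_nhds x (div_pos hδ0 four_pos)),
    LipschitzOnWith.of_dist_le_mul fun y hy z hz => ?_⟩
  have hyz : 2 * dist y z ≤ δ := by
    linarith [dist_triangle_right y z x, mem_ball.1 hy.2, mem_ball.1 hz.2]
  have hmax : ∀ y ∈ goodSet Ω g k, localMaximal volume g δ y ≤ ((k + 1 : ℝ≥0) : ℝ≥0∞) :=
    fun y hy => hy.2.2.trans_eq (by push_cast; rfl)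
  simpa using hw.dist_preciseRep_le hΩ hf hg (hmax y hy.1) (hmax z hz.1) (hsub y hy.1)
    (hsub z hz.1) hyz

end GoodSet

section LowDimension

theorem exists_lipschitzOnWith_of_finite {X Y : Type*} [MetricSpace X] [PseudoMetricSpace Y]
    (f : X → Y) {s : Set X} (hs : s.Finite) : ∃ K, LipschitzOnWith K f s := by
  refine LocallyLipschitzOn.exists_lipschitzOnWith_of_compact hs.isCompact fun x hx => ?_
  exact ⟨0, {x}, singleton_mem_nhdsWithin_of_mem_discrete hs.isDiscrete hx,
    by rintro _ rfl _ rfl; simp⟩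

theorem finite_of_hausdorffMeasure_lt_top_of_le_one {n : ℕ} (hn : n ≤ 1) {B : Set (En n)}
    (hB : μH[(n : ℝ) - 1] B < ⊤) : B.Finite := by
  interval_cases n
  · exact B.toFinite
  · by_contra hinf
    refine hB.ne (Set.Infinite.meas_eq_top hinf ⟨1, one_ne_zero, fun x _ => ?_⟩)
    rw [Nat.cast_one, sub_self, Measure.hausdorffMeasure_zero_singleton]

end LowDimension

section Capacity

variable {n : ℕ}

theorem cap_one_empty : cap 1 (∅ : Set (En n)) = 0 := by
  refine le_antisymm ((iInf₂_le ∅ ⟨subset_rfl, isOpen_empty⟩).trans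
    (iSup₂_le fun F hF => ?_)) bot_le
  rw [subset_empty_iff.1 hF.1]
  exact (iInf₂_le 0 ⟨contDiff_const, HasCompactSupport.zero, by simp⟩).trans (by simp)

theorem lipschitzOnQE_of_lipschitzOnWith {f : En n → ℝ} {s : Set (En n)} {K : ℝ≥0}
    (h : LipschitzOnWith K f s) : LipschitzOnQE 1 f s :=
  ⟨∅, empty_subset _, cap_one_empty, K, h.mono sdiff_subset⟩

end Capacity

theorem luzin_hausdorff_general {n : ℕ} (Ω : Set (En n)) (hΩ : IsOpen Ω) (f : En n → ℝ)
    (g : En n → En n) (h : En n → Fin n → En n) (hf : MemW2pLoc 1 Ω f g h) (B : Set (En n))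
    (hB : MeasurableSet B) (hBΩ : B ⊆ Ω) (hBfin : μH[(n : ℝ) - 1] B < ⊤) (ε : ℝ≥0∞) (hε : 0 < ε) :
    ∃ Bε ⊆ B, MeasurableSet Bε ∧ (∃ K, LipschitzOnWith K (preciseRep f) Bε) ∧
      μH[(n : ℝ) - 1] (B \ Bε) < ε := by
  rcases le_or_gt n 1 with hn | hn
  · refine ⟨B, subset_rfl, hB, exists_lipschitzOnWith_of_finite _
      (finite_of_hausdorffMeasure_lt_top_of_le_one hn hBfin), by simpa using hε⟩
  obtain ⟨m, rfl⟩ : ∃ m, n = m + 1 := ⟨n - 1, by omega⟩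
  rw [Nat.cast_add_one, add_sub_cancel_right] at hBfin ⊢
  have hmeas k : MeasurableSet (goodSet Ω g k) := (isCompact_goodSet Ω g k).measurableSet
  have hlim := tendsto_measure_iInter_atTop (μ := μH[m]) (s := fun k => B \ goodSet Ω g k)
    (fun k => (hB.diff (hmeas k)).nullMeasurableSet)
    (fun k l hkl => sdiff_subset_sdiff_right (goodSet_mono Ω g hkl))
    ⟨0, measure_ne_top_of_subset sdiff_subset hBfin.ne⟩
  rw [← sdiff_iUnion, measure_mono_null (sdiff_subset_sdiff_left hBΩ)
    (hf.hausdorffMeasure_diff_iUnion_goodSet (by omega) hΩ)] at hlim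
  obtain ⟨k, hk⟩ := (hlim.eventually_lt_const hε).exists
  obtain ⟨hfloc, hgloc, -⟩ := hf.locallyIntegrableOn hΩ
  obtain ⟨K, hK⟩ := hf.2.2.1.exists_lipschitzOnWith_goodSet hΩ hfloc hgloc k
  exact ⟨B ∩ goodSet Ω g k, inter_subset_left, hB.inter (hmeas k), ⟨K, hK.mono inter_subset_right⟩,
    by rwa [sdiff_self_inter]⟩

/-- the refined Luzin type theorem for `W^{2,1}_loc` functions with respect to the
`(n-1)`-Hausdorff measure. -/
theorem luzin_hausdorff {n : ℕ} (Ω : Set (En n)) (hΩ : IsOpen Ω)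
    (f : En n → ℝ) (g : En n → En n) (h : En n → Fin n → En n)
    (hf : MemW2pLoc 1 Ω f g h)
    (B : Set (En n)) (hB : MeasurableSet B) (hBΩ : B ⊆ Ω)
    (hBfin : μH[(n : ℝ) - 1] B < ⊤) :
    ∀ ε : ℝ≥0∞, 0 < ε →
      ∃ Bε : Set (En n), Bε ⊆ B ∧ MeasurableSet Bε ∧
        LipschitzOnQE 1 (preciseRep f) Bε ∧
        μH[(n : ℝ) - 1] (B \ Bε) < ε := by
  intro ε hε
  obtain ⟨Bε, hsub, hmeas, ⟨K, hK⟩, hlt⟩ :=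
    luzin_hausdorff_general Ω hΩ f g h hf B hB hBΩ hBfin ε hε
  exact ⟨Bε, hsub, hmeas, lipschitzOnQE_of_lipschitzOnWith hK, hlt⟩
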